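/- arXiv:2008.13098 — 7 statements merged into one kernel-verified Lean document; each statement's English description precedes it below -/
import Mathlib

section
/- Adaptive gradient method with an inexact model (general bound). Let x_0 ∈ Q be a starting point, {δ_k}_{k≥0} and {δ̃_k}_{k≥0} nonnegative sequences, and {L_{k+1}}_{k≥0} positive numbers. Set α_{k+1} = 1/L_{k+1} and A_N = Σ_{k=0}^{N-1} α_{k+1}. Suppose that for every k ≥ 0 there is a function ψ_{δ_k}(·, x_k) with value f_{δ_k}(x_k) that is a (δ_k, L̄_{k+1}, ‖·‖)-model of f at x_k for some L̄_{k+1} > 0, that the descent condition f_{δ_k}(x_{k+1}) ≤ f_{δ_k}(x_k) + ψ_{δ_k}(x_{k+1}, x_k) + (L_{k+1}/2)‖x_{k+1} − x_k‖² + δ_k holds, and that x_{k+1} is a δ̃_k-inexact minimizer on Q of φ_{k+1}(x) = (1/L_{k+1}) ψ_{δ_k}(x, x_k) + V[x_k](x). Let x_* be a minimizer of f on Q with V[x_0](x_*) ≤ R², and let x̄_N = (1/A_N) Σ_{k=0}^{N-1} α_{k+1} x_{k+1}. Then f(x̄_N) − f(x_*) ≤ R²/A_N + (1/A_N) Σ_{k=0}^{N-1}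 δ̃_k + (2/A_N) Σ_{k=0}^{N-1} α_{k+1} δ_k. -/
open Finset RealInnerProductSpace

/-!
Write `V y` for the Bregman divergence from `y` and `α = 1 / L (k + 1)`. Since `V (x k)` is
differentiable on `Q` with gradient `Dd (x (k + 1)) - Dd (x k)` at `x (k + 1)`, subtracting this
gradient from the subgradient `h` of `α ψ + V (x k)` leaves a subgradient of `α ψ`
(`subgradient_sub_gradient`). Together with the inexact optimality of `x (k + 1)` and the
three-point identity for `V`, this gives, for every `z ∈ Q`,
`α ψ (x (k + 1)) ≤ α ψ z + δt k + V (x k) z - V (x (k + 1)) z - V (x k) (x (k + 1))`.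
Strong convexity of `d` bounds the last term by the quadratic term of the descent condition
(`half_sq_le_bregman`), whence
`α (f (x (k + 1)) - f z) ≤ δt k + 2 α δ k + V (x k) z - V (x (k + 1)) z`.
At `z = xstar` the divergences telescope, and Jensen's inequality passes to the averaged point.
-/

open Filter Topology

/-- A gradient within a convex set computes the one-sided directional derivatives towards
points of the set. -/
lemma HasGradientWithinAt.tendsto_segment {E : Type*} [NormedAddCommGroup E]
    [InnerProductSpace ℝ E] [CompleteSpace E] {Q : Set E} (hQ : Convex ℝ Q) {d : E → ℝ}
    {g y z : E} (hd : HasGradientWithinAt d g Q y) (hy : y ∈ Q) (hz : z ∈ Q) :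
    Tendsto (fun t : ℝ => t⁻¹ * (d (t • z + (1 - t) • y) - d y)) (𝓝[>] 0) (𝓝 ⟪g, z - y⟫) := by
  set c : ℝ → E := fun t => t • z + (1 - t) • y with hc
  have hc0 : c 0 = y := by simp [hc]
  have hcd : HasDerivWithinAt c (z - y) (Set.Ioc 0 1) 0 := by
    have h1 : HasDerivAt (fun t : ℝ => t • (z - y) + y) ((1 : ℝ) • (z - y)) 0 :=
      ((hasDerivAt_id (0 : ℝ)).smul_const (z - y)).add_const y
    rw [one_smul] at h1
    have h2 : c = fun t : ℝ => t • (z - y) + y := by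
      funext t
      simp only [hc]
      module
    rw [h2]
    exact h1.hasDerivWithinAt
  have hmaps : Set.MapsTo c (Set.Ioc 0 1) Q := fun t ht =>
    hQ hz hy ht.1.le (by linarith [ht.2]) (by ring)
  have hd0 : HasFDerivWithinAt d (InnerProductSpace.toDual ℝ E g) Q (c 0) := by
    rw [hc0]
    exact hd.hasFDerivWithinAt
  have hcomp := hd0.comp_hasDerivWithinAt (0 : ℝ) hcd hmaps
  rw [hasDerivWithinAt_iff_tendsto_slope' (by simp),
    nhdsWithin_Ioc_eq_nhdsGT (zero_lt_one : (0 : ℝ) < 1)] at hcomp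
  refine Tendsto.congr (fun t => ?_) hcomp
  rw [slope_def_field, Function.comp_apply, Function.comp_apply, hc0, sub_zero, div_eq_inv_mul]

/-- Strong convexity gives the quadratic lower bound on the Bregman divergence. -/
lemma half_sq_le_bregman {E : Type*} [NormedAddCommGroup E]
    [InnerProductSpace ℝ E] [CompleteSpace E] {Q : Set E} (hQ : Convex ℝ Q) {d : E → ℝ}
    {g y z : E} {r : ℝ} (hd : HasGradientWithinAt d g Q y) (hy : y ∈ Q) (hz : z ∈ Q)
    (hs : ∀ t : ℝ, t ∈ Set.Icc (0 : ℝ) 1 →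
      d (t • z + (1 - t) • y) ≤ t * d z + (1 - t) * d y - t * (1 - t) / 2 * r ^ 2) :
    1 / 2 * r ^ 2 ≤ d z - d y - ⟪g, z - y⟫ := by
  have hlim := hd.tendsto_segment hQ hy hz
  have hup : Tendsto (fun t : ℝ => d z - d y - (1 - t) / 2 * r ^ 2) (𝓝[>] 0)
      (𝓝 (d z - d y - (1 - 0) / 2 * r ^ 2)) :=
    ((by fun_prop : Continuous fun t : ℝ => d z - d y - (1 - t) / 2 * r ^ 2).tendsto 0).mono_left
      nhdsWithin_le_nhds
  have hle : ⟪g, z - y⟫ ≤ d z - d y - (1 - 0) / 2 * r ^ 2 := by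
    refine le_of_tendsto_of_tendsto hlim hup ?_
    filter_upwards [Ioc_mem_nhdsGT (zero_lt_one : (0 : ℝ) < 1)] with t ht
    rw [inv_mul_le_iff₀ ht.1]
    have := hs t ⟨ht.1.le, ht.2⟩
    linarith
  linarith

/-- If `h` is a subgradient over `Q` of the sum of a convex function `p` and a function `d`
differentiable within `Q` with gradient `g`, then `h - g` is a subgradient of `p` over `Q`. -/
lemma subgradient_sub_gradient {E : Type*} [NormedAddCommGroup E]
    [InnerProductSpace ℝ E] [CompleteSpace E] {Q : Set E} {p d : E → ℝ}
    {g h y z : E} (hp : ConvexOn ℝ Q p) (hd : HasGradientWithinAt d g Q y)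
    (hy : y ∈ Q) (hz : z ∈ Q)
    (hsub : ∀ w ∈ Q, p y + d y + ⟪h, w - y⟫ ≤ p w + d w) :
    p y + ⟪h, z - y⟫ - ⟪g, z - y⟫ ≤ p z := by
  have hlim := hd.tendsto_segment hp.1 hy hz
  have hle : p y + ⟪h, z - y⟫ - p z ≤ ⟪g, z - y⟫ := by
    refine ge_of_tendsto hlim ?_
    filter_upwards [Ioc_mem_nhdsGT (zero_lt_one : (0 : ℝ) < 1)] with t ht
    rw [le_inv_mul_iff₀ ht.1]
    have h1t : 0 ≤ 1 - t := by linarith [ht.2]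
    have h1 := hsub _ (hp.1 hz hy ht.1.le h1t (by ring))
    have h2 := hp.2 hz hy ht.1.le h1t (by ring)
    have h3 : t • z + (1 - t) • y - y = t • (z - y) := by module
    rw [h3, real_inner_smul_right] at h1
    simp only [smul_eq_mul] at h2
    linarith
  linarith


/-- **Adaptive gradient method with an inexact model (general bound).**
`E = ℝⁿ` with the standard inner product; `nrm` is a (general) norm on `E`;
`d` is a continuously differentiable, `1`-strongly convex (w.r.t. `nrm`) prox-function
with gradient `Dd`, and `V y x = d x - d y - ⟪Dd y, x - y⟫` is the Bregman divergence.
`ψ k` is the model `ψ_{δ_k}(·, x_k)` with value `fδ k` at `x k`. -/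
theorem adaptive_gradient_method_general_bound
    {n : ℕ} (Q : Set (EuclideanSpace ℝ (Fin n)))
    (hQne : Q.Nonempty) (hQclosed : IsClosed Q) (hQconv : Convex ℝ Q)
    (f : EuclideanSpace ℝ (Fin n) → ℝ) (hfconv : ConvexOn ℝ Q f)
    -- a general norm `nrm` on `ℝⁿ`
    (nrm : EuclideanSpace ℝ (Fin n) → ℝ)
    (hnrm_zero : ∀ z, nrm z = 0 ↔ z = 0)
    (hnrm_smul : ∀ (c : ℝ) z, nrm (c • z) = |c| * nrm z)
    (hnrm_add : ∀ z w, nrm (z + w) ≤ nrm z + nrm w)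
    -- the prox-function `d`, continuously differentiable and 1-strongly convex w.r.t. `nrm`
    (d : EuclideanSpace ℝ (Fin n) → ℝ)
    (Dd : EuclideanSpace ℝ (Fin n) → EuclideanSpace ℝ (Fin n))
    (hd_diff : ∀ z ∈ Q, HasGradientWithinAt d (Dd z) Q z)
    (hd_cont : ContinuousOn Dd Q)
    (hd_strong : ∀ z ∈ Q, ∀ w ∈ Q, ∀ t : ℝ, t ∈ Set.Icc (0 : ℝ) 1 →
      d (t • z + (1 - t) • w) ≤
        t * d z + (1 - t) * d w - t * (1 - t) / 2 * nrm (z - w) ^ 2)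
    -- Bregman divergence
    (V : EuclideanSpace ℝ (Fin n) → EuclideanSpace ℝ (Fin n) → ℝ)
    (hV : ∀ y z, V y z = d z - d y - ⟪Dd y, z - y⟫)
    -- the method data
    (N : ℕ) (hN : 0 < N)
    (x : ℕ → EuclideanSpace ℝ (Fin n)) (hxQ : ∀ k, x k ∈ Q)
    (δ δt : ℕ → ℝ) (hδ : ∀ k, 0 ≤ δ k) (hδt : ∀ k, 0 ≤ δt k)
    (L : ℕ → ℝ) (hL : ∀ k, 0 < L (k + 1))
    (α : ℕ → ℝ) (hα : ∀ k, α (k + 1) = 1 / L (k + 1))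
    (A : ℝ) (hA : A = ∑ k ∈ range N, α (k + 1))
    -- `ψ k = ψ_{δ_k}(·, x_k)` with value `fδ k = f_{δ_k}(x_k)`:
    -- a `(δ_k, L̄_{k+1}, nrm)`-model of `f` at `x_k` for some `L̄_{k+1} > 0`
    (ψ : ℕ → EuclideanSpace ℝ (Fin n) → ℝ) (fδ : ℕ → ℝ)
    (hmodel : ∀ k, ∃ Lbar : ℝ, 0 < Lbar ∧
      ConvexOn ℝ Q (ψ k) ∧ ψ k (x k) = 0 ∧
      ∀ z ∈ Q, 0 ≤ f z - (fδ k + ψ k z) ∧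
        f z - (fδ k + ψ k z) ≤ Lbar / 2 * nrm (z - x k) ^ 2 + δ k)
    -- the value of the model at the next iterate (`f_{δ_k}(x_{k+1})`)
    (fδnext : ℕ → ℝ)
    (hfδnext : ∀ k, 0 ≤ f (x (k + 1)) - fδnext k ∧
      f (x (k + 1)) - fδnext k ≤ δ k)
    -- descent condition
    (hdescent : ∀ k, fδnext k ≤ fδ k + ψ k (x (k + 1)) +
      L (k + 1) / 2 * nrm (x (k + 1) - x k) ^ 2 + δ k)
    -- `x_{k+1}` is a `δ̃_k`-inexact minimizer of `φ_{k+1}(z) = (1/L_{k+1}) ψ k z + V (x k) z` on `Q`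
    (hmin : ∀ k, ∃ h : EuclideanSpace ℝ (Fin n),
      (∀ z ∈ Q, (1 / L (k + 1)) * ψ k z + V (x k) z ≥
        (1 / L (k + 1)) * ψ k (x (k + 1)) + V (x k) (x (k + 1)) + ⟪h, z - x (k + 1)⟫) ∧
      (∀ z ∈ Q, ⟪h, z - x (k + 1)⟫ ≥ -δt k))
    -- the optimum
    (xstar : EuclideanSpace ℝ (Fin n)) (hxstarQ : xstar ∈ Q)
    (hxstar : ∀ z ∈ Q, f xstar ≤ f z)
    (R : ℝ) (hR : V (x 0) xstar ≤ R ^ 2)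
    -- averaged iterate
    (xbar : EuclideanSpace ℝ (Fin n))
    (hxbar : xbar = A⁻¹ • ∑ k ∈ range N, α (k + 1) • x (k + 1)) :
    f xbar - f xstar ≤
      R ^ 2 / A + (1 / A) * ∑ k ∈ range N, δt k +
        (2 / A) * ∑ k ∈ range N, α (k + 1) * δ k := by
  have hα_pos : ∀ k, 0 < α (k + 1) := fun k => by
    rw [hα]
    exact one_div_pos.mpr (hL k)
  have hA_pos : 0 < A := by
    rw [hA]
    exact sum_pos (fun k _ => hα_pos k) ⟨0, mem_range.mpr hN⟩
  have hV_lower : ∀ y ∈ Q, ∀ z ∈ Q, 1 / 2 * nrm (z - y) ^ 2 ≤ V y z := by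
    intro y hy z hz
    rw [hV]
    exact half_sq_le_bregman hQconv (hd_diff y hy) hy hz (hd_strong z hz y hy)
  have hstep : ∀ k, α (k + 1) * (f (x (k + 1)) - f xstar) ≤
      V (x k) xstar - V (x (k + 1)) xstar + δt k + 2 * (α (k + 1) * δ k) := by
    intro k
    obtain ⟨Lbar, -, hψ, -, hmod⟩ := hmodel k
    obtain ⟨h, hsub, hinexact⟩ := hmin k
    -- The linear part of `V (x k)` is absorbed in the subgradient, so that only the gradient
    -- of `d` itself has to be subtracted.
    have hprox := subgradient_sub_gradient (h := h + Dd (x k)) (hψ.smul (hα_pos k).le)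
      (hd_diff _ (hxQ (k + 1))) (hxQ (k + 1)) hxstarQ (by
        intro w hw
        have h1 := hsub w hw
        rw [hV, hV, ← hα] at h1
        have h2 : ⟪Dd (x k), w - x (k + 1)⟫ =
            ⟪Dd (x k), w - x k⟫ - ⟪Dd (x k), x (k + 1) - x k⟫ := by
          rw [← inner_sub_right, sub_sub_sub_cancel_right]
        simp only [smul_eq_mul]
        rw [inner_add_left, h2]
        linarith)
    simp only [smul_eq_mul] at hprox
    rw [inner_add_left] at hprox
    have h3 : ⟪Dd (x k), xstar - x (k + 1)⟫ =
        ⟪Dd (x k), xstar - x k⟫ - ⟪Dd (x k), x (k + 1) - x k⟫ := by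
      rw [← inner_sub_right, sub_sub_sub_cancel_right]
    have hquad := hV_lower _ (hxQ k) _ (hxQ (k + 1))
    have hinex := hinexact xstar hxstarQ
    have hf_upper : f (x (k + 1)) ≤ fδ k + ψ k (x (k + 1)) +
        L (k + 1) / 2 * nrm (x (k + 1) - x k) ^ 2 + 2 * δ k := by
      linarith [hdescent k, (hfδnext k).2]
    have hf_lower : fδ k + ψ k xstar ≤ f xstar := by linarith [(hmod xstar hxstarQ).1]
    have hf_upper_scaled := mul_le_mul_of_nonneg_left hf_upper (hα_pos k).le
    have hf_lower_scaled := mul_le_mul_of_nonneg_left hf_lower (hα_pos k).le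
    have hαL : α (k + 1) * L (k + 1) = 1 := by
      rw [hα]
      exact one_div_mul_cancel (hL k).ne'
    have hαquad : α (k + 1) * (L (k + 1) / 2 * nrm (x (k + 1) - x k) ^ 2) =
        1 / 2 * nrm (x (k + 1) - x k) ^ 2 := by
      rw [← hαL]
      ring
    rw [hV] at hquad
    rw [hV, hV]
    linarith
  have htel : ∑ k ∈ range N, α (k + 1) * (f (x (k + 1)) - f xstar) ≤
      R ^ 2 + ∑ k ∈ range N, δt k + 2 * ∑ k ∈ range N, α (k + 1) * δ k := by
    have h1 := sum_le_sum fun k (_ : k ∈ range N) => hstep k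
    rw [sum_add_distrib, sum_add_distrib, sum_range_sub' (fun k => V (x k) xstar),
      ← mul_sum] at h1
    have h2 := hV_lower _ (hxQ N) _ hxstarQ
    have h3 := sq_nonneg (nrm (xstar - x N))
    linarith
  have hjensen : A * f xbar ≤ ∑ k ∈ range N, α (k + 1) * f (x (k + 1)) := by
    have h1 := hfconv.map_centerMass_le (t := range N) (w := fun k => α (k + 1))
      (p := fun k => x (k + 1)) (fun k _ => (hα_pos k).le) (hA ▸ hA_pos)
      (fun k _ => hxQ (k + 1))
    simp only [centerMass, ← hA, ← hxbar, Function.comp_apply, smul_eq_mul] at h1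
    rwa [le_inv_mul_iff₀ hA_pos] at h1
  have hmain : A * (f xbar - f xstar) ≤
      R ^ 2 + ∑ k ∈ range N, δt k + 2 * ∑ k ∈ range N, α (k + 1) * δ k := by
    simp only [mul_sub, sum_sub_distrib, ← sum_mul, ← hA] at htel
    linarith
  calc f xbar - f xstar
      ≤ (R ^ 2 + ∑ k ∈ range N, δt k + 2 * ∑ k ∈ range N, α (k + 1) * δ k) / A := by
        rwa [le_div_iff₀' hA_pos]
    _ = _ := by ring
end

section
/- Adaptive fast gradient method with an inexact model (general bound). Let x_0 = y_0 = u_0 ∈ Q, A_0 = α_0 = 0, and for k ≥ 0 let L_{k+1} > 0, let α_{k+1} be the largest root of A_k + α = L_{k+1} α², A_{k+1} = A_k + α_{k+1}, y_{k+1} = (α_{k+1} u_k + A_k x_k)/A_{k+1}, u_{k+1} a δ̃_k-inexact minimizer on Q of φ_{k+1}(x) = V[u_k](x) + α_{k+1} ψ_{δ_k}(x, y_{k+1}), and x_{k+1} = (α_{k+1} u_{k+1} + A_k x_k)/A_{k+1}. Suppose that for every k the function ψ_{δ_k}(·, y_{k+1}) with value f_{δ_k}(y_{k+1}) is a (δ_k,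 L̄_{k+1}, ‖·‖)-model of f at y_{k+1} for some L̄_{k+1} > 0, and that f_{δ_k}(x_{k+1}) ≤ f_{δ_k}(y_{k+1}) + ψ_{δ_k}(x_{k+1}, y_{k+1}) + (L_{k+1}/2)‖x_{k+1} − y_{k+1}‖² + δ_k. Let x_* be a minimizer of f on Q with V[x_0](x_*) ≤ R². Then f(x_N) − f(x_*) ≤ R²/A_N + (Σ_{k=0}^{N-1} δ̃_k)/A_N + (2 Σ_{k=0}^{N-1} δ_k A_{k+1})/A_N. -/
/-!
The proof is the estimate-sequence argument for accelerated methods. Two facts about the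
prox-function `d` drive it, both obtained by differentiating along a segment of `Q` at its left end.

* `bregman_lower_bound`: strong convexity gives `‖z - p‖² / 2 ≤ V[p](z)`.
* `inexact_prox_step`: if `q` is a `δ̃`-inexact minimizer of `V[p] + a ψ` on `Q`, then
  `V[p](q) + a ψ(q) + V[q](z) ≤ V[p](z) + a ψ(z) + δ̃` for every `z ∈ Q`.

Since `A_{k+1} = L_{k+1} α_{k+1}²` and `x_{k+1} - y_{k+1} = (α_{k+1} / A_{k+1}) (u_{k+1} - u_k)`, the
quadratic term of the descent condition multiplied by `A_{k+1}` is exactly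
`‖u_{k+1} - u_k‖² / 2 ≤ V[u_k](u_{k+1})`. Convexity of the model and the prox inequality at `x_*` then
show that `A_k (f(x_k) - f(x_*)) + V[u_k](x_*)` grows by at most `δ̃_k + 2 δ_k A_{k+1}` per step;
summing and dividing by `A_N > 0` gives the bound.
-/

open Finset RealInnerProductSpace

/-- Only the one-sided derivative at the left endpoint of `[0, 1]` is needed, because segments in
`Q` may leave `Q` when prolonged. -/
lemma deriv_nonneg_of_nonneg_on_Icc {F : ℝ → ℝ} {a : ℝ}
    (hF : HasDerivWithinAt F a (Set.Icc 0 1) 0) (h0 : F 0 = 0)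
    (hpos : ∀ t ∈ Set.Icc (0 : ℝ) 1, 0 ≤ F t) : 0 ≤ a := by
  have h1 : HasDerivWithinAt F a (Set.Ioc 0 1) 0 := hF.mono Set.Ioc_subset_Icc_self
  rw [hasDerivWithinAt_iff_tendsto_slope' (by simp)] at h1
  have : (nhdsWithin (0 : ℝ) (Set.Ioc 0 1)).NeBot := by
    rw [nhdsWithin_Ioc_eq_nhdsGT zero_lt_one]; infer_instance
  refine ge_of_tendsto h1 ?_
  filter_upwards [self_mem_nhdsWithin] with t ht
  rw [slope_def_field, h0, sub_zero, sub_zero]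
  exact div_nonneg (hpos t ⟨ht.1.le, ht.2⟩) ht.1.le

section Bregman

variable {E : Type*} [NormedAddCommGroup E] [InnerProductSpace ℝ E]

lemma segment_mem {Q : Set E} (hQ : Convex ℝ Q) {p z : E} (hp : p ∈ Q) (hz : z ∈ Q)
    {t : ℝ} (ht : t ∈ Set.Icc (0 : ℝ) 1) : t • z + (1 - t) • p ∈ Q :=
  hQ hz hp ht.1 (by linarith [ht.2]) (by ring)

variable [CompleteSpace E]

lemma hasDerivWithinAt_segment {Q : Set E} (hQ : Convex ℝ Q) {d : E → ℝ} {g p z : E}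
    (hp : p ∈ Q) (hz : z ∈ Q) (hd : HasGradientWithinAt d g Q p) :
    HasDerivWithinAt (fun t : ℝ => d (t • z + (1 - t) • p)) ⟪g, z - p⟫ (Set.Icc 0 1) 0 := by
  have hc : HasDerivWithinAt (fun t : ℝ => t • z + (1 - t) • p) (z - p) (Set.Icc 0 1) 0 := by
    have h1 := (hasDerivAt_id (0 : ℝ)).smul_const z
    have h2 := ((hasDerivAt_id (0 : ℝ)).const_sub 1).smul_const p
    have h3 := (h1.add h2).hasDerivWithinAt (s := Set.Icc 0 1)
    refine h3.congr_deriv ?_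
    rw [one_smul, neg_one_smul, sub_eq_add_neg]
  have hd' := hd.hasFDerivWithinAt
  have hp0 : p = (fun t : ℝ => t • z + (1 - t) • p) 0 := by simp
  have := HasFDerivWithinAt.comp_hasDerivWithinAt_of_eq (0 : ℝ) hd' hc
    (fun t ht => segment_mem hQ hp hz ht) hp0
  simpa [Function.comp_def] using this

lemma bregman_lower_bound {Q : Set E} (hQ : Convex ℝ Q) {d nrm : E → ℝ} {g p z : E}
    (hp : p ∈ Q) (hz : z ∈ Q) (hd : HasGradientWithinAt d g Q p)
    (hs : ∀ t : ℝ, t ∈ Set.Icc (0 : ℝ) 1 →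
      d (t • z + (1 - t) • p) ≤
        t * d z + (1 - t) * d p - t * (1 - t) / 2 * nrm (z - p) ^ 2) :
    nrm (z - p) ^ 2 / 2 ≤ d z - d p - ⟪g, z - p⟫ := by
  have h1 := hasDerivWithinAt_segment hQ hp hz hd
  have hid := hasDerivAt_id (0 : ℝ)
  have h2 : HasDerivWithinAt (fun t : ℝ =>
      t * d z + (1 - t) * d p - t * (1 - t) / 2 * nrm (z - p) ^ 2)
      (d z - d p - nrm (z - p) ^ 2 / 2) (Set.Icc 0 1) 0 := by
    have := (((hid.mul_const (d z)).add ((hid.const_sub 1).mul_const (d p))).sub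
      (((hid.mul (hid.const_sub 1)).div_const 2).mul_const (nrm (z - p) ^ 2)))
    refine (this.congr_deriv ?_).hasDerivWithinAt
    simp only [id]
    ring
  have := deriv_nonneg_of_nonneg_on_Icc (h2.sub h1) (by simp)
    (fun t ht => by simpa using hs t ht)
  linarith

/-- The subgradient inequality is only used near `q`, where the linear part of `V[p]` at `q`
takes over; the three-point identity for `V` then produces the term `V[q](z)`. -/
lemma inexact_prox_step {Q : Set E} (hQ : Convex ℝ Q) {d ψ : E → ℝ} {gp gq p q z h : E}
    {a e : ℝ} (ha : 0 ≤ a) (hψ : ConvexOn ℝ Q ψ)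
    (hq : q ∈ Q) (hz : z ∈ Q) (hd : HasGradientWithinAt d gq Q q)
    (hsub : ∀ w ∈ Q, (d w - d p - ⟪gp, w - p⟫) + a * ψ w ≥
        (d q - d p - ⟪gp, q - p⟫) + a * ψ q + ⟪h, w - q⟫)
    (hmin : ⟪h, z - q⟫ ≥ -e) :
    (d q - d p - ⟪gp, q - p⟫) + a * ψ q + (d z - d q - ⟪gq, z - q⟫) ≤
      (d z - d p - ⟪gp, z - p⟫) + a * ψ z + e := by
  have h1 := hasDerivWithinAt_segment hQ hq hz hd
  have h2 := ((hasDerivAt_id (0 : ℝ)).mul_const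
    (a * (ψ z - ψ q) + e - ⟪gp, z - q⟫)).hasDerivWithinAt (s := Set.Icc 0 1)
  have h3 := deriv_nonneg_of_nonneg_on_Icc ((h1.sub_const (d q)).add h2) (by simp) ?_
  · have e1 : ⟪gp, z - p⟫ = ⟪gp, z - q⟫ + ⟪gp, q - p⟫ := by
      rw [← inner_add_right, sub_add_sub_cancel]
    rw [e1]
    linarith
  · intro t ht
    have hw := hsub _ (segment_mem hQ hq hz ht)
    have hc := hψ.2 hz hq ht.1 (by linarith [ht.2] : (0 : ℝ) ≤ 1 - t) (by ring)
    simp only [smul_eq_mul] at hc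
    have hc' := mul_le_mul_of_nonneg_left hc ha
    have hm := mul_le_mul_of_nonneg_left hmin ht.1
    have e0 : t • z + (1 - t) • q - q = t • (z - q) := by module
    have e1 : ⟪gp, t • z + (1 - t) • q - p⟫ = t * ⟪gp, z - q⟫ + ⟪gp, q - p⟫ := by
      rw [← real_inner_smul_right, ← inner_add_right]
      congr 1
      module
    rw [e0, real_inner_smul_right, e1] at hw
    simp only [Pi.add_apply, id]
    nlinarith

end Bregman

lemma largest_root_pos {A L a : ℝ} (hA : 0 ≤ A) (hL : 0 < L)
    (h : ∀ β : ℝ, A + β = L * β ^ 2 → β ≤ a) : 0 < a := by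
  -- `(1 + √(1 + 4LA)) / (2L)` is a positive root
  obtain ⟨s, hs0, hs⟩ : ∃ s : ℝ, 0 ≤ s ∧ s ^ 2 = 1 + 4 * L * A :=
    ⟨_, Real.sqrt_nonneg _, Real.sq_sqrt (by positivity)⟩
  have h0 : 0 < (1 + s) / (2 * L) := by positivity
  refine h0.trans_le (h _ ?_)
  field_simp
  nlinarith

/-- **Adaptive fast gradient method with an inexact model (general bound).**
`ψ k` is the model `ψ_{δ_k}(·, y_{k+1})` with value `fδ k = f_{δ_k}(y_{k+1})`. -/
theorem adaptive_fast_gradient_method_general_bound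
    {n : ℕ} (Q : Set (EuclideanSpace ℝ (Fin n)))
    (hQne : Q.Nonempty) (hQclosed : IsClosed Q) (hQconv : Convex ℝ Q)
    (f : EuclideanSpace ℝ (Fin n) → ℝ) (hfconv : ConvexOn ℝ Q f)
    -- a general norm `nrm` on `ℝⁿ`
    (nrm : EuclideanSpace ℝ (Fin n) → ℝ)
    (hnrm_zero : ∀ z, nrm z = 0 ↔ z = 0)
    (hnrm_smul : ∀ (c : ℝ) z, nrm (c • z) = |c| * nrm z)
    (hnrm_add : ∀ z w, nrm (z + w) ≤ nrm z + nrm w)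
    -- the prox-function `d`, continuously differentiable and 1-strongly convex w.r.t. `nrm`
    (d : EuclideanSpace ℝ (Fin n) → ℝ)
    (Dd : EuclideanSpace ℝ (Fin n) → EuclideanSpace ℝ (Fin n))
    (hd_diff : ∀ z ∈ Q, HasGradientWithinAt d (Dd z) Q z)
    (hd_cont : ContinuousOn Dd Q)
    (hd_strong : ∀ z ∈ Q, ∀ w ∈ Q, ∀ t : ℝ, t ∈ Set.Icc (0 : ℝ) 1 →
      d (t • z + (1 - t) • w) ≤
        t * d z + (1 - t) * d w - t * (1 - t) / 2 * nrm (z - w) ^ 2)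
    -- Bregman divergence
    (V : EuclideanSpace ℝ (Fin n) → EuclideanSpace ℝ (Fin n) → ℝ)
    (hV : ∀ y z, V y z = d z - d y - ⟪Dd y, z - y⟫)
    -- the method data
    (N : ℕ) (hN : 0 < N)
    (x y u : ℕ → EuclideanSpace ℝ (Fin n))
    (hxQ : ∀ k, x k ∈ Q) (hyQ : ∀ k, y k ∈ Q) (huQ : ∀ k, u k ∈ Q)
    (hinit : y 0 = x 0 ∧ u 0 = x 0)
    (δ δt : ℕ → ℝ) (hδ : ∀ k, 0 ≤ δ k) (hδt : ∀ k, 0 ≤ δt k)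
    (L : ℕ → ℝ) (hL : ∀ k, 0 < L (k + 1))
    (α A : ℕ → ℝ) (hα0 : α 0 = 0) (hA0 : A 0 = 0)
    -- `α_{k+1}` is the largest root of `A_k + α = L_{k+1} α²`
    (hαroot : ∀ k, A k + α (k + 1) = L (k + 1) * α (k + 1) ^ 2 ∧
      ∀ β : ℝ, A k + β = L (k + 1) * β ^ 2 → β ≤ α (k + 1))
    (hArec : ∀ k, A (k + 1) = A k + α (k + 1))
    (hy : ∀ k, y (k + 1) = (A (k + 1))⁻¹ • (α (k + 1) • u k + A k • x k))
    -- `ψ k = ψ_{δ_k}(·, y_{k+1})` with value `fδ k = f_{δ_k}(y_{k+1})`: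
    -- a `(δ_k, L̄_{k+1}, nrm)`-model of `f` at `y_{k+1}` for some `L̄_{k+1} > 0`
    (ψ : ℕ → EuclideanSpace ℝ (Fin n) → ℝ) (fδ : ℕ → ℝ)
    (hmodel : ∀ k, ∃ Lbar : ℝ, 0 < Lbar ∧
      ConvexOn ℝ Q (ψ k) ∧ ψ k (y (k + 1)) = 0 ∧
      ∀ z ∈ Q, 0 ≤ f z - (fδ k + ψ k z) ∧
        f z - (fδ k + ψ k z) ≤ Lbar / 2 * nrm (z - y (k + 1)) ^ 2 + δ k)
    -- the value of the model at the next iterate (`f_{δ_k}(x_{k+1})`)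
    (fδnext : ℕ → ℝ)
    (hfδnext : ∀ k, 0 ≤ f (x (k + 1)) - fδnext k ∧
      f (x (k + 1)) - fδnext k ≤ δ k)
    -- descent condition
    (hdescent : ∀ k, fδnext k ≤ fδ k + ψ k (x (k + 1)) +
      L (k + 1) / 2 * nrm (x (k + 1) - y (k + 1)) ^ 2 + δ k)
    -- `u_{k+1}` is a `δ̃_k`-inexact minimizer of `φ_{k+1}(z) = V (u k) z + α_{k+1} ψ k z` on `Q`
    (hmin : ∀ k, ∃ h : EuclideanSpace ℝ (Fin n),
      (∀ z ∈ Q, V (u k) z + α (k + 1) * ψ k z ≥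
        V (u k) (u (k + 1)) + α (k + 1) * ψ k (u (k + 1)) + ⟪h, z - u (k + 1)⟫) ∧
      (∀ z ∈ Q, ⟪h, z - u (k + 1)⟫ ≥ -δt k))
    (hx : ∀ k, x (k + 1) = (A (k + 1))⁻¹ • (α (k + 1) • u (k + 1) + A k • x k))
    -- the optimum
    (xstar : EuclideanSpace ℝ (Fin n)) (hxstarQ : xstar ∈ Q)
    (hxstar : ∀ z ∈ Q, f xstar ≤ f z)
    (R : ℝ) (hR : V (x 0) xstar ≤ R ^ 2) :
    f (x N) - f xstar ≤
      R ^ 2 / A N + (∑ k ∈ range N, δt k) / A N +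
        (2 * ∑ k ∈ range N, δ k * A (k + 1)) / A N := by
  have hpos : ∀ k, 0 ≤ A k ∧ 0 < α (k + 1) := by
    intro k
    induction k with
    | zero => exact ⟨hA0.ge, largest_root_pos hA0.ge (hL 0) (hαroot 0).2⟩
    | succ k ih =>
      have : 0 ≤ A (k + 1) := by rw [hArec]; linarith [ih.1, ih.2]
      exact ⟨this, largest_root_pos this (hL _) (hαroot _).2⟩
  have hApos : ∀ k, 0 < A (k + 1) := fun k => by rw [hArec]; linarith [(hpos k).1, (hpos k).2]
  have hVlow : ∀ p ∈ Q, ∀ z ∈ Q, nrm (z - p) ^ 2 / 2 ≤ V p z := by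
    intro p hp z hz
    rw [hV]
    exact bregman_lower_bound hQconv hp hz (hd_diff p hp) (hd_strong z hz p hp)
  have hstep : ∀ k, A (k + 1) * (f (x (k + 1)) - f xstar) + V (u (k + 1)) xstar ≤
      A k * (f (x k) - f xstar) + V (u k) xstar + δt k + 2 * (δ k * A (k + 1)) := by
    intro k
    obtain ⟨hAk, hα⟩ := hpos k
    have hA := hApos k
    obtain ⟨_, _, hψ, _, hmod⟩ := hmodel k
    obtain ⟨h, hsub, hmin'⟩ := hmin k
    have hprox : V (u k) (u (k + 1)) + α (k + 1) * ψ k (u (k + 1)) + V (u (k + 1)) xstar ≤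
        V (u k) xstar + α (k + 1) * ψ k xstar + δt k := by
      simp only [hV] at hsub ⊢
      exact inexact_prox_step hQconv hα.le hψ (huQ _) hxstarQ (hd_diff _ (huQ _)) hsub
        (hmin' _ hxstarQ)
    have hxy : x (k + 1) - y (k + 1) = (α (k + 1) / A (k + 1)) • (u (k + 1) - u k) := by
      rw [hx, hy]
      module
    -- the choice of `α_{k+1}` makes the two quadratic terms coincide
    have hquad : A (k + 1) * (L (k + 1) / 2 * nrm (x (k + 1) - y (k + 1)) ^ 2) =
        nrm (u (k + 1) - u k) ^ 2 / 2 := by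
      have hroot : A (k + 1) = L (k + 1) * α (k + 1) ^ 2 := by rw [hArec]; exact (hαroot k).1
      rw [hxy, hnrm_smul, mul_pow, sq_abs]
      have : A (k + 1) * (L (k + 1) / 2 *
          ((α (k + 1) / A (k + 1)) ^ 2 * nrm (u (k + 1) - u k) ^ 2)) =
          (L (k + 1) * α (k + 1) ^ 2) / A (k + 1) * (nrm (u (k + 1) - u k) ^ 2 / 2) := by
        field_simp
      rw [this, ← hroot, div_self hA.ne', one_mul]
    have hlow := hVlow _ (huQ k) _ (huQ (k + 1))
    have hconv : A (k + 1) * ψ k (x (k + 1)) ≤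
        α (k + 1) * ψ k (u (k + 1)) + A k * ψ k (x k) := by
      have hc := hψ.2 (huQ (k + 1)) (hxQ k) (div_nonneg hα.le hA.le) (div_nonneg hAk hA.le)
        (by rw [← add_div, add_comm, ← hArec, div_self hA.ne'])
      have he : x (k + 1) = (α (k + 1) / A (k + 1)) • u (k + 1) + (A k / A (k + 1)) • x k := by
        rw [hx]
        module
      rw [← he] at hc
      have hc' := mul_le_mul_of_nonneg_left hc hA.le
      refine hc'.trans (le_of_eq ?_)
      simp only [smul_eq_mul]
      field_simp
    have hdes : A (k + 1) * f (x (k + 1)) ≤ A (k + 1) * (fδ k + ψ k (x (k + 1)) +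
        L (k + 1) / 2 * nrm (x (k + 1) - y (k + 1)) ^ 2 + 2 * δ k) :=
      mul_le_mul_of_nonneg_left (by linarith [hdescent k, (hfδnext k).2]) hA.le
    have hmx : A k * (fδ k + ψ k (x k)) ≤ A k * f (x k) :=
      mul_le_mul_of_nonneg_left (by linarith [(hmod _ (hxQ k)).1]) hAk
    have hms : α (k + 1) * (fδ k + ψ k xstar) ≤ α (k + 1) * f xstar :=
      mul_le_mul_of_nonneg_left (by linarith [(hmod _ hxstarQ).1]) hα.le
    have hAf : A (k + 1) * fδ k = A k * fδ k + α (k + 1) * fδ k := by rw [hArec]; ring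
    have hAs : A (k + 1) * f xstar = A k * f xstar + α (k + 1) * f xstar := by rw [hArec]; ring
    linarith
  have hsum : ∀ m, A m * (f (x m) - f xstar) + V (u m) xstar ≤
      R ^ 2 + ∑ k ∈ range m, δt k + 2 * ∑ k ∈ range m, δ k * A (k + 1) := by
    intro m
    induction m with
    | zero => simpa [hA0, hinit.2] using hR
    | succ m ih =>
      rw [sum_range_succ, sum_range_succ]
      linarith [hstep m]
  have hAN : 0 < A N := by
    obtain ⟨m, rfl⟩ := Nat.exists_eq_succ_of_ne_zero hN.ne'
    exact hApos m
  have hVN : 0 ≤ V (u N) xstar :=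
    le_trans (by positivity) (hVlow _ (huQ N) _ hxstarQ)
  rw [← add_div, ← add_div, le_div_iff₀ hAN]
  linarith [hsum N]
end

section
/- Gradient method under relative smoothness with an inexact model. Let d : Q → ℝ be a convex, continuously differentiable function (1-strong convexity is NOT assumed) and V[y](x) = d(x) − d(y) − ⟨∇d(y), x − y⟩. Fix L > 0 and δ, δ̃ ≥ 0, and suppose ψ_δ(·,·) with values f_δ(·) is a (δ, L, V)-model of f on Q, i.e., for every y ∈ Q the function ψ_δ(·,y) is convex with ψ_δ(y,y) = 0 and 0 ≤ f(x) − (f_δ(y) + ψ_δ(x,y)) ≤ L·V[y](x) + δ for all x ∈ Q. Starting from x_0 ∈ Q, let x_{k+1} be a δ̃-inexact minimizer on Q of φ_{k+1}(x) = ψ_δ(x, x_k) + L·V[x_k](x) for each k ≥ 0. Let x_* be a minimizer of f on Q with V[x_0](x_*) ≤ R², and let x̄_N = (1/N) Σ_{k=0}^{N-1} x_{k+1}. Then f(x̄_N) − f(x_*) ≤ L R²/N + δ̃ + δ. -/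
/-!
Fix an iterate `y = x k` and put `u = x (k + 1)`. Since `V y` differs from `d` by an affine function
and `d` is differentiable, a subgradient of `ψ y + L * V y` at `u` yields, after subtracting
`L * (Dd u - Dd y)`, a subgradient of the convex function `ψ y` at `u` relative to `Q`
(`subgradient_sub_gradient`). Combined with inexact minimality and the three-point identity
`⟪Dd u - Dd y, z - u⟫ = V y z - V u z - V y u`, this bounds `ψ y u + L * V y u` by
`ψ y z + L * V y z - L * V u z + δt`, and the two model inequalities turn this into
`f u - f z ≤ L * V y z - L * V u z + δt + δ`.
At `z = xstar` the sum over `k < N` telescopes; the last term `V (x N) xstar` is nonnegative because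
`d` is convex (`gradient_inequality`), and Jensen's inequality passes to the averaged iterate.
-/


open Finset RealInnerProductSpace

open Filter Topology

section Gradient

variable {n : ℕ} {Q : Set (EuclideanSpace ℝ (Fin n))} {d : EuclideanSpace ℝ (Fin n) → ℝ}
  {g u z : EuclideanSpace ℝ (Fin n)}

/-- The gradient within a convex set gives the one-sided directional derivatives towards points
of that set. -/
lemma tendsto_slope_segment (hQ : Convex ℝ Q) (hd : HasGradientWithinAt d g Q u)
    (hu : u ∈ Q) (hz : z ∈ Q) :
    Tendsto (fun t : ℝ => t⁻¹ * (d (u + t • (z - u)) - d u)) (𝓝[>] 0) (𝓝 ⟪g, z - u⟫) := by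
  have hline : HasDerivWithinAt (fun t : ℝ => u + t • (z - u)) (z - u) (Set.Ioc 0 1) 0 := by
    simpa using (((hasDerivAt_id (0 : ℝ)).smul_const (z - u)).const_add u).hasDerivWithinAt
  have hmaps : Set.MapsTo (fun t : ℝ => u + t • (z - u)) (Set.Ioc 0 1) Q := fun t ht =>
    hQ.add_smul_sub_mem hu hz ⟨ht.1.le, ht.2⟩
  have hcomp := HasFDerivWithinAt.comp_hasDerivWithinAt_of_eq (0 : ℝ) hd.hasFDerivWithinAt hline
    hmaps (by simp)
  rw [hasDerivWithinAt_iff_tendsto_slope' (by simp), nhdsWithin_Ioc_eq_nhdsGT zero_lt_one] at hcomp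
  simpa [slope_fun_def] using hcomp

lemma eventually_mem_Ioc : ∀ᶠ t : ℝ in 𝓝[>] 0, t ∈ Set.Ioc (0 : ℝ) 1 :=
  Ioc_mem_nhdsGT zero_lt_one

/-- Convexity along the segment from `u` to `z`, in difference form. -/
lemma convexOn_segment_sub_le {p : EuclideanSpace ℝ (Fin n) → ℝ} (hp : ConvexOn ℝ Q p)
    (hu : u ∈ Q) (hz : z ∈ Q) {t : ℝ} (ht : t ∈ Set.Ioc (0 : ℝ) 1) :
    p (u + t • (z - u)) - p u ≤ t * (p z - p u) := by
  have h := hp.2 hu hz (sub_nonneg.2 ht.2) ht.1.le (by ring)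
  rw [show (1 - t) • u + t • z = u + t • (z - u) by module] at h
  simp only [smul_eq_mul] at h
  linarith

lemma gradient_inequality (hd : ConvexOn ℝ Q d) (hg : HasGradientWithinAt d g Q u)
    (hu : u ∈ Q) (hz : z ∈ Q) : ⟪g, z - u⟫ ≤ d z - d u := by
  refine le_of_tendsto (tendsto_slope_segment hd.1 hg hu hz) ?_
  filter_upwards [eventually_mem_Ioc] with t ht
  rw [inv_mul_le_iff₀ ht.1]
  exact convexOn_segment_sub_le hd hu hz ht

/-- If `h` is a subgradient at `u` of the sum of a convex function `p` and a differentiable function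
`L * (d - ⟪a, ·⟫)`, then `h - L • (g - a)` is a subgradient of `p` at `u`. -/
lemma subgradient_sub_gradient_s4 {p : EuclideanSpace ℝ (Fin n) → ℝ} (hp : ConvexOn ℝ Q p)
    (hg : HasGradientWithinAt d g Q u) {L : ℝ} {a h : EuclideanSpace ℝ (Fin n)}
    (hsub : ∀ z ∈ Q, p u + L * d u + ⟪h, z - u⟫ ≤ p z + L * (d z - ⟪a, z - u⟫))
    (hu : u ∈ Q) (hz : z ∈ Q) :
    ⟪h, z - u⟫ ≤ p z - p u + L * (⟪g, z - u⟫ - ⟪a, z - u⟫) := by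
  have hlim := (((tendsto_slope_segment hp.1 hg hu hz).sub_const ⟪a, z - u⟫).const_mul L).const_add
    (p z - p u)
  refine ge_of_tendsto hlim ?_
  filter_upwards [eventually_mem_Ioc] with t ht
  have h1 := hsub _ (hp.1.add_smul_sub_mem hu hz ⟨ht.1.le, ht.2⟩)
  have h2 := convexOn_segment_sub_le hp hu hz ht
  simp only [add_sub_cancel_left, inner_smul_right] at h1
  have ht0 : t ≠ 0 := ht.1.ne'
  refine le_of_mul_le_mul_left ?_ ht.1
  calc t * ⟪h, z - u⟫
      ≤ t * (p z - p u) + L * ((d (u + t • (z - u)) - d u) - t * ⟪a, z - u⟫) := by linarith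
    _ = _ := by field_simp

end Gradient

/-- **Gradient method under relative smoothness with an inexact model.**
`d` is convex and continuously differentiable (1-strong convexity is *not* assumed),
`V y x = d x - d y - ⟪Dd y, x - y⟫`, and `ψ y` is the model `ψ_δ(·, y)` with value `fδ y`,
forming a `(δ, L, V)`-model of `f` on `Q`. -/
theorem gradient_method_relative_smoothness
    {n : ℕ} (Q : Set (EuclideanSpace ℝ (Fin n)))
    (hQne : Q.Nonempty) (hQclosed : IsClosed Q) (hQconv : Convex ℝ Q)
    (f : EuclideanSpace ℝ (Fin n) → ℝ) (hfconv : ConvexOn ℝ Q f)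
    -- the prox-function `d`: convex and continuously differentiable
    (d : EuclideanSpace ℝ (Fin n) → ℝ) (hdconv : ConvexOn ℝ Q d)
    (Dd : EuclideanSpace ℝ (Fin n) → EuclideanSpace ℝ (Fin n))
    (hd_diff : ∀ z ∈ Q, HasGradientWithinAt d (Dd z) Q z)
    (hd_cont : ContinuousOn Dd Q)
    -- Bregman divergence
    (V : EuclideanSpace ℝ (Fin n) → EuclideanSpace ℝ (Fin n) → ℝ)
    (hV : ∀ y z, V y z = d z - d y - ⟪Dd y, z - y⟫)
    (L : ℝ) (hL : 0 < L) (δ δt : ℝ) (hδ : 0 ≤ δ) (hδt : 0 ≤ δt)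
    -- `(δ, L, V)`-model of `f` on `Q`: `ψ y = ψ_δ(·, y)` with value `fδ y = f_δ(y)`
    (ψ : EuclideanSpace ℝ (Fin n) → EuclideanSpace ℝ (Fin n) → ℝ)
    (fδ : EuclideanSpace ℝ (Fin n) → ℝ)
    (hmodel : ∀ y ∈ Q, ConvexOn ℝ Q (ψ y) ∧ ψ y y = 0 ∧
      ∀ z ∈ Q, 0 ≤ f z - (fδ y + ψ y z) ∧
        f z - (fδ y + ψ y z) ≤ L * V y z + δ)
    -- the iterates
    (N : ℕ) (hN : 0 < N)
    (x : ℕ → EuclideanSpace ℝ (Fin n)) (hxQ : ∀ k, x k ∈ Q)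
    -- `x_{k+1}` is a `δ̃`-inexact minimizer of `φ_{k+1}(z) = ψ (x k) z + L * V (x k) z` on `Q`
    (hmin : ∀ k, ∃ h : EuclideanSpace ℝ (Fin n),
      (∀ z ∈ Q, ψ (x k) z + L * V (x k) z ≥
        ψ (x k) (x (k + 1)) + L * V (x k) (x (k + 1)) + ⟪h, z - x (k + 1)⟫) ∧
      (∀ z ∈ Q, ⟪h, z - x (k + 1)⟫ ≥ -δt))
    -- the optimum
    (xstar : EuclideanSpace ℝ (Fin n)) (hxstarQ : xstar ∈ Q)
    (hxstar : ∀ z ∈ Q, f xstar ≤ f z)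
    (R : ℝ) (hR : V (x 0) xstar ≤ R ^ 2)
    -- averaged iterate
    (xbar : EuclideanSpace ℝ (Fin n))
    (hxbar : xbar = (N : ℝ)⁻¹ • ∑ k ∈ range N, x (k + 1)) :
    f xbar - f xstar ≤ L * R ^ 2 / N + δt + δ := by
  have step : ∀ k, f (x (k + 1)) - f xstar ≤
      L * V (x k) xstar - L * V (x (k + 1)) xstar + (δt + δ) := by
    intro k
    obtain ⟨h, hh, hh'⟩ := hmin k
    obtain ⟨hψ, -, hm⟩ := hmodel (x k) (hxQ k)
    have hinner : ∀ z, ⟪Dd (x k), z - x k⟫ =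
        ⟪Dd (x k), z - x (k + 1)⟫ + ⟪Dd (x k), x (k + 1) - x k⟫ := by
      intro z
      rw [← inner_add_right, sub_add_sub_cancel]
    have hkey := subgradient_sub_gradient_s4 (L := L) (a := Dd (x k)) (h := h) hψ
      (hd_diff _ (hxQ (k + 1))) (fun z hz => by
        have := hh z hz
        rw [hV, hV, hinner z] at this
        linarith) (hxQ (k + 1)) hxstarQ
    have h1 := hh' xstar hxstarQ
    have h2 := (hm _ (hxQ (k + 1))).2
    have h3 := (hm _ hxstarQ).1
    have three_point : V (x k) xstar - V (x (k + 1)) xstar - V (x k) (x (k + 1)) =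
        ⟪Dd (x (k + 1)), xstar - x (k + 1)⟫ - ⟪Dd (x k), xstar - x (k + 1)⟫ := by
      rw [hV, hV, hV, hinner xstar]
      ring
    rw [← three_point] at hkey
    linarith
  have hsum : ∑ k ∈ range N, (f (x (k + 1)) - f xstar) ≤ L * R ^ 2 + N * (δt + δ) := by
    have hlast : 0 ≤ L * V (x N) xstar := by
      refine mul_nonneg hL.le ?_
      rw [hV]
      linarith [gradient_inequality hdconv (hd_diff _ (hxQ N)) (hxQ N) hxstarQ]
    calc ∑ k ∈ range N, (f (x (k + 1)) - f xstar)
        ≤ ∑ k ∈ range N, (L * V (x k) xstar - L * V (x (k + 1)) xstar + (δt + δ)) :=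
          sum_le_sum fun k _ => step k
      _ = L * V (x 0) xstar - L * V (x N) xstar + N * (δt + δ) := by
          rw [sum_add_distrib, sum_range_sub' (fun k => L * V (x k) xstar)]
          simp [mul_add]
      _ ≤ L * R ^ 2 + N * (δt + δ) := by
          linarith [mul_le_mul_of_nonneg_left hR hL.le]
  have hN0 : (0 : ℝ) < N := by exact_mod_cast hN
  have jensen : f xbar ≤ (N : ℝ)⁻¹ * ∑ k ∈ range N, f (x (k + 1)) := by
    rw [hxbar, smul_sum, mul_sum]
    exact hfconv.map_sum_le (t := range N) (w := fun _ => (N : ℝ)⁻¹)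
      (p := fun k => x (k + 1)) (fun _ _ => by positivity) (by simp [hN0.ne'])
      (fun k _ => hxQ (k + 1))
  calc f xbar - f xstar
      ≤ (N : ℝ)⁻¹ * ∑ k ∈ range N, f (x (k + 1)) - f xstar := by linarith
    _ = (N : ℝ)⁻¹ * ∑ k ∈ range N, (f (x (k + 1)) - f xstar) := by
        rw [sum_sub_distrib]
        simp [mul_sub, hN0.ne']
    _ ≤ (N : ℝ)⁻¹ * (L * R ^ 2 + N * (δt + δ)) := by gcongr
    _ = L * R ^ 2 / N + δt + δ := by field_simp; ring
end

section
/- Fast gradient method with a (δ₁, δ₂, L, ‖·‖₂)-model (deterministic bound). Let x_0 = y_0 = u_0 ∈ Q, A_0 = α_0 = 0, L > 0, and for k ≥ 0: let α_{k+1} be the largest root of A_k + α = L α², A_{k+1} = A_k + α_{k+1}, y_{k+1} = (α_{k+1} u_k + A_k x_k)/A_{k+1}, u_{k+1} = argmin_{x∈Q} [ (1/2)‖x − u_k‖₂² + α_{k+1} ψ_k(x, y_{k+1}) ], and x_{k+1} = (α_{k+1} u_{k+1} + A_k x_k)/A_{k+1}. Suppose for every k the function ψ_k(·, y_{k+1})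 is a (δ₁^k, δ₂^k, L, ‖·‖₂)-model of f at y_{k+1}. Let x_* be a minimizer of f on Q with (1/2)‖x_* − x_0‖₂² ≤ R². Then f(x_N) − f(x_*) ≤ 4LR²/N² + (1/A_N) Σ_{k=0}^{N-1} A_k δ₁^k(x_k, y_{k+1}) + (1/A_N) Σ_{k=0}^{N-1} α_{k+1} δ₁^k(x_*, y_{k+1}) + (1/A_N) Σ_{k=0}^{N-1} A_{k+1} δ₂^k. -/
/-!
The proof is the estimating-sequence argument for accelerated methods, with potential
`A k * (f (x k) - f xstar) + ‖xstar - u k‖ ^ 2 / 2`.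

* `prox_three_point`: the objective minimized by `u (k + 1)` is `1`-strongly convex, hence it
  exceeds its minimum at `z` by at least `‖z - u (k + 1)‖ ^ 2 / 2`.
* `potential_step`: since `x (k + 1) - y (k + 1) = (α / A) • (u (k + 1) - u k)` and `A = L * α ^ 2`
  (indices `k + 1`), the quadratic error of the model at `x (k + 1)`, multiplied by `A`, is exactly
  the `‖u (k + 1) - u k‖ ^ 2 / 2` of the proximal objective. Convexity of the model and the
  three-point inequality then show that the potential grows by no more than the model errors.
* `step_size_growth`: the largest root satisfies `α (k + 1) ≥ α k + 1 / (2 * L)`, which gives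
  `A N = L * α N ^ 2 ≥ N ^ 2 / (4 * L)`.

Telescoping the potential from `A 0 = 0`, `u 0 = x 0` and dividing by `A N` gives the bound.
-/

open Finset RealInnerProductSpace

/-- Three-point inequality for a proximal step: `v` minimizes `‖· - u‖ ^ 2 / 2 + a * φ` over `Q`. -/
lemma prox_three_point {E : Type*} [NormedAddCommGroup E] [InnerProductSpace ℝ E]
    {Q : Set E} {φ : E → ℝ} (hφ : ConvexOn ℝ Q φ) {a : ℝ} (ha : 0 ≤ a) {u v z : E}
    (hv : v ∈ Q) (hz : z ∈ Q)
    (hmin : ∀ w ∈ Q, (1 / 2) * ‖v - u‖ ^ 2 + a * φ v ≤ (1 / 2) * ‖w - u‖ ^ 2 + a * φ w) :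
    (1 / 2) * ‖v - u‖ ^ 2 + a * φ v + (1 / 2) * ‖z - v‖ ^ 2 ≤
      (1 / 2) * ‖z - u‖ ^ 2 + a * φ z := by
  have hexp : ∀ t : ℝ, ‖(v - u) + t • (z - v)‖ ^ 2 =
      ‖v - u‖ ^ 2 + 2 * t * inner ℝ (v - u) (z - v) + t ^ 2 * ‖z - v‖ ^ 2 := by
    intro t
    rw [norm_add_sq_real, inner_smul_right, norm_smul, mul_pow, Real.norm_eq_abs, sq_abs]
    ring
  -- Minimality along the segment from `v` to `z`, divided by the parameter `t`.
  have key : ∀ t : ℝ, 0 < t → t ≤ 1 →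
      0 ≤ (inner ℝ (v - u) (z - v) + a * (φ z - φ v)) + t * (‖z - v‖ ^ 2 / 2) := by
    intro t ht0 ht1
    have h1 := hmin ((1 - t) • v + t • z)
      (hφ.1 hv hz (by linarith) ht0.le (by ring))
    have h2 := hφ.2 hv hz (show 0 ≤ 1 - t by linarith) ht0.le (by ring)
    have h3 : (1 - t) • v + t • z - u = (v - u) + t • (z - v) := by module
    rw [h3, hexp] at h1
    have h4 := mul_le_mul_of_nonneg_left h2 ha
    simp only [smul_eq_mul] at h4
    refine nonneg_of_mul_nonneg_right (a := t) ?_ ht0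
    nlinarith
  have hlim : 0 ≤ inner ℝ (v - u) (z - v) + a * (φ z - φ v) := by
    have htend : Filter.Tendsto (fun t : ℝ => (inner ℝ (v - u) (z - v) + a * (φ z - φ v)) +
        t * (‖z - v‖ ^ 2 / 2)) (nhdsWithin 0 (Set.Ioi 0))
        (nhds ((inner ℝ (v - u) (z - v) + a * (φ z - φ v)) + 0 * (‖z - v‖ ^ 2 / 2))) := by
      refine Filter.Tendsto.mono_left (Continuous.tendsto ?_ 0) nhdsWithin_le_nhds
      fun_prop
    rw [zero_mul, add_zero] at htend
    refine ge_of_tendsto htend ?_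
    filter_upwards [Ioc_mem_nhdsGT (zero_lt_one' ℝ)] with t ht
    exact key t ht.1 ht.2
  have h1 := hexp 1
  rw [one_smul, sub_add_sub_cancel'] at h1
  linarith

/-- The largest root `t` of `L * s ^ 2 + t = L * t ^ 2` is at least `s + 1 / (2 * L)`. -/
lemma step_size_growth {L s t : ℝ} (hL : 0 < L) (hs : 0 ≤ s)
    (hroot : L * s ^ 2 + t = L * t ^ 2)
    (hmax : ∀ β : ℝ, L * s ^ 2 + β = L * β ^ 2 → β ≤ t) :
    s + 1 / (2 * L) ≤ t := by
  -- `1 / L - t` is the other root, so `t` lies to the right of the vertex `1 / (2 * L)`.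
  have hother : 1 / L - t ≤ t := by
    apply hmax
    have : L * (1 / L - t) ^ 2 = 1 / L - 2 * t + L * t ^ 2 := by
      field_simp
      ring
    linarith
  have hhalf : 1 / L = 2 * (1 / (2 * L)) := by
    field_simp
  have hvertex : 0 ≤ t - 1 / (2 * L) := by linarith
  have hsq : (t - 1 / (2 * L)) ^ 2 = s ^ 2 + (1 / (2 * L)) ^ 2 := by
    have h : t ^ 2 - t / L = s ^ 2 := by
      field_simp
      linarith
    have h' : (t - 1 / (2 * L)) ^ 2 = t ^ 2 - t / L + (1 / (2 * L)) ^ 2 := by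
      field_simp
      ring
    rw [h', h]
  have : s ≤ t - 1 / (2 * L) := by
    refine (sq_le_sq₀ hs hvertex).1 ?_
    rw [hsq]
    exact le_add_of_nonneg_right (sq_nonneg _)
  linarith

/-- One step of the method, from `(B, x, u)` to `(A, x', v)` with step size `a` and model `φ` at
`y`, compared with an arbitrary point `z ∈ Q`. The numbers `d`, `e`, `δ` bound the model errors at
`x`, at `z`, and in the quadratic upper bound. -/
lemma potential_step {E : Type*} [NormedAddCommGroup E] [InnerProductSpace ℝ E]
    {Q : Set E} {f φ : E → ℝ} (hφ : ConvexOn ℝ Q φ) {L a A B d e δ : ℝ} {x y u v x' z : E}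
    (ha : 0 < a) (hB : 0 ≤ B) (hA : A = B + a) (hAL : A = L * a ^ 2)
    (hx : x ∈ Q) (hv : v ∈ Q) (hz : z ∈ Q)
    (hy : y = A⁻¹ • (a • u + B • x)) (hx' : x' = A⁻¹ • (a • v + B • x))
    (hupper : f x' - (f y + φ x') ≤ L / 2 * ‖x' - y‖ ^ 2 + δ)
    (hdx : -d ≤ f x - (f y + φ x)) (hez : -e ≤ f z - (f y + φ z))
    (hmin : ∀ w ∈ Q, (1 / 2) * ‖v - u‖ ^ 2 + a * φ v ≤ (1 / 2) * ‖w - u‖ ^ 2 + a * φ w) :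
    A * (f x' - f z) + (1 / 2) * ‖z - v‖ ^ 2 ≤
      B * (f x - f z) + (1 / 2) * ‖z - u‖ ^ 2 + (B * d + a * e + A * δ) := by
  have hApos : 0 < A := by linarith
  have hprox := prox_three_point hφ ha.le hv hz hmin
  have hconv : A * φ x' ≤ a * φ v + B * φ x := by
    have h := hφ.2 hv hx (show 0 ≤ A⁻¹ * a by positivity) (show 0 ≤ A⁻¹ * B by positivity)
      (by rw [← mul_add, add_comm a B, ← hA, inv_mul_cancel₀ hApos.ne'])
    have hxx : (A⁻¹ * a) • v + (A⁻¹ * B) • x = x' := by rw [hx']; module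
    rw [hxx] at h
    have h2 := mul_le_mul_of_nonneg_left h hApos.le
    have h3 : A * ((A⁻¹ * a) • φ v + (A⁻¹ * B) • φ x) = a * φ v + B * φ x := by
      simp only [smul_eq_mul]
      field_simp
    rwa [h3] at h2
  have hquad : A * (L / 2 * ‖x' - y‖ ^ 2) = (1 / 2) * ‖v - u‖ ^ 2 := by
    have h : x' - y = (A⁻¹ * a) • (v - u) := by rw [hx', hy]; module
    rw [h, norm_smul, mul_pow, Real.norm_eq_abs, sq_abs, mul_pow]
    have hc : A * L * (A⁻¹ ^ 2 * a ^ 2) = 1 := by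
      field_simp
      exact hAL.symm
    linear_combination (1 / 2) * ‖v - u‖ ^ 2 * hc
  have h1 := mul_le_mul_of_nonneg_left hupper hApos.le
  have h2 := mul_le_mul_of_nonneg_left hdx hB
  have h3 := mul_le_mul_of_nonneg_left hez ha.le
  have hAf : A * f y = B * f y + a * f y := by rw [hA]; ring
  have hAz : A * f z = B * f z + a * f z := by rw [hA]; ring
  linarith

/-- **Fast gradient method with a `(δ₁, δ₂, L, ‖·‖₂)`-model (deterministic bound).**
`ψ k` is the model `ψ_k(·, y_{k+1})`, a `(δ₁^k, δ₂^k, L, ‖·‖₂)`-model of `f` at `y_{k+1}`,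
where `δ₁^k : Q × Q → ℝ` and `δ₂^k ∈ ℝ`. -/
theorem fast_gradient_method_stochastic_model_deterministic_bound
    {n : ℕ} (Q : Set (EuclideanSpace ℝ (Fin n)))
    (hQne : Q.Nonempty) (hQclosed : IsClosed Q) (hQconv : Convex ℝ Q)
    (f : EuclideanSpace ℝ (Fin n) → ℝ) (hfconv : ConvexOn ℝ Q f)
    (L : ℝ) (hL : 0 < L)
    (N : ℕ) (hN : 0 < N)
    (x y u : ℕ → EuclideanSpace ℝ (Fin n))
    (hxQ : ∀ k, x k ∈ Q) (hyQ : ∀ k, y k ∈ Q) (huQ : ∀ k, u k ∈ Q)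
    (hinit : y 0 = x 0 ∧ u 0 = x 0)
    (α A : ℕ → ℝ) (hα0 : α 0 = 0) (hA0 : A 0 = 0)
    -- `α_{k+1}` is the largest root of `A_k + α = L α²`
    (hαroot : ∀ k, A k + α (k + 1) = L * α (k + 1) ^ 2 ∧
      ∀ β : ℝ, A k + β = L * β ^ 2 → β ≤ α (k + 1))
    (hArec : ∀ k, A (k + 1) = A k + α (k + 1))
    (hy : ∀ k, y (k + 1) = (A (k + 1))⁻¹ • (α (k + 1) • u k + A k • x k))
    -- the models: `ψ k = ψ_k(·, y_{k+1})` is a `(δ₁^k, δ₂^k, L, ‖·‖₂)`-model of `f` at `y_{k+1}`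
    (ψ : ℕ → EuclideanSpace ℝ (Fin n) → ℝ)
    (δ1 : ℕ → EuclideanSpace ℝ (Fin n) → EuclideanSpace ℝ (Fin n) → ℝ)
    (δ2 : ℕ → ℝ)
    (hmodel : ∀ k, ConvexOn ℝ Q (ψ k) ∧ ψ k (y (k + 1)) = 0 ∧
      ∀ z ∈ Q, -δ1 k z (y (k + 1)) ≤ f z - (f (y (k + 1)) + ψ k z) ∧
        f z - (f (y (k + 1)) + ψ k z) ≤ L / 2 * ‖z - y (k + 1)‖ ^ 2 + δ2 k)
    -- `u_{k+1} = argmin_{z ∈ Q} [(1/2)‖z − u_k‖₂² + α_{k+1} ψ_k(z, y_{k+1})]`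
    (hmin : ∀ k, ∀ z ∈ Q,
      (1 / 2) * ‖u (k + 1) - u k‖ ^ 2 + α (k + 1) * ψ k (u (k + 1)) ≤
        (1 / 2) * ‖z - u k‖ ^ 2 + α (k + 1) * ψ k z)
    (hx : ∀ k, x (k + 1) = (A (k + 1))⁻¹ • (α (k + 1) • u (k + 1) + A k • x k))
    -- the optimum
    (xstar : EuclideanSpace ℝ (Fin n)) (hxstarQ : xstar ∈ Q)
    (hxstar : ∀ z ∈ Q, f xstar ≤ f z)
    (R : ℝ) (hR : (1 / 2) * ‖xstar - x 0‖ ^ 2 ≤ R ^ 2) :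
    f (x N) - f xstar ≤ 4 * L * R ^ 2 / N ^ 2 +
      (1 / A N) * ∑ k ∈ range N, A k * δ1 k (x k) (y (k + 1)) +
      (1 / A N) * ∑ k ∈ range N, α (k + 1) * δ1 k xstar (y (k + 1)) +
      (1 / A N) * ∑ k ∈ range N, A (k + 1) * δ2 k := by
  have hAL : ∀ k, A k = L * α k ^ 2 := by
    intro k
    cases k with
    | zero => simp [hα0, hA0]
    | succ k => rw [hArec]; exact (hαroot k).1
  have hLinv : 0 < 1 / (2 * L) := by positivity
  have hgrow : ∀ k, 0 ≤ α k → α k + 1 / (2 * L) ≤ α (k + 1) := by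
    intro k hk
    have h := hαroot k
    rw [hAL k] at h
    exact step_size_growth hL hk h.1 h.2
  have hαlow : ∀ k : ℕ, k * (1 / (2 * L)) ≤ α k := by
    intro k
    induction k with
    | zero => simp [hα0]
    | succ k ih =>
      have h := hgrow k (le_trans (by positivity) ih)
      push_cast
      linarith
  have hαnn : ∀ k, 0 ≤ α k := fun k => le_trans (by positivity) (hαlow k)
  have hαpos : ∀ k, 0 < α (k + 1) := fun k => by linarith [hgrow k (hαnn k), hαnn k]
  have hAnn : ∀ k, 0 ≤ A k := fun k => by rw [hAL]; positivity
  have hpot : ∀ M : ℕ, A M * (f (x M) - f xstar) + (1 / 2) * ‖xstar - u M‖ ^ 2 ≤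
      R ^ 2 + ∑ k ∈ range M, (A k * δ1 k (x k) (y (k + 1)) +
        α (k + 1) * δ1 k xstar (y (k + 1)) + A (k + 1) * δ2 k) := by
    intro M
    induction M with
    | zero => simpa [hA0, hinit.2] using hR
    | succ k ih =>
      obtain ⟨hc, -, hb⟩ := hmodel k
      have h := potential_step hc (hαpos k) (hAnn k) (hArec k) (hAL (k + 1)) (hxQ k)
        (huQ (k + 1)) hxstarQ (hy k) (hx k) (hb _ (hxQ (k + 1))).2 (hb _ (hxQ k)).1
        (hb _ hxstarQ).1 (hmin k)
      rw [sum_range_succ]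
      linarith
  have hNpos : (0 : ℝ) < N := by exact_mod_cast hN
  have hAlow : (N : ℝ) ^ 2 / (4 * L) ≤ A N := by
    have h := pow_le_pow_left₀ (by positivity) (hαlow N) 2
    have h2 := mul_le_mul_of_nonneg_left h hL.le
    rw [← hAL] at h2
    refine le_trans (le_of_eq ?_) h2
    field_simp
    norm_num
  have hApos : 0 < A N := lt_of_lt_of_le (by positivity) hAlow
  have hrate : R ^ 2 / A N ≤ 4 * L * R ^ 2 / N ^ 2 := by
    calc R ^ 2 / A N ≤ R ^ 2 / ((N : ℝ) ^ 2 / (4 * L)) := by gcongr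
      _ = 4 * L * R ^ 2 / N ^ 2 := by field_simp
  have hfinal := hpot N
  rw [sum_add_distrib, sum_add_distrib] at hfinal
  have hdiv : f (x N) - f xstar ≤ (R ^ 2 + (∑ k ∈ range N, A k * δ1 k (x k) (y (k + 1)) +
      ∑ k ∈ range N, α (k + 1) * δ1 k xstar (y (k + 1)) +
      ∑ k ∈ range N, A (k + 1) * δ2 k)) / A N := by
    rw [le_div_iff₀ hApos]
    linarith [sq_nonneg ‖xstar - u N‖]
  refine hdiv.trans ?_
  rw [add_div, add_div, add_div]
  simp only [one_div_mul_eq_div]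
  linarith
end

section
/- Inexact model for functions with Hölder continuous gradient. Let Q ⊆ ℝⁿ be a nonempty convex set and f : Q → ℝ a convex differentiable function whose gradient is ν-Hölder continuous for some ν ∈ [0,1): ‖∇f(x) − ∇f(y)‖_* ≤ L_ν ‖x − y‖^ν for all x, y ∈ Q, where L_ν > 0. Then for every δ > 0 and all x, y ∈ Q, 0 ≤ f(x) − f(y) − ⟨∇f(y), x − y⟩ ≤ (L(δ)/2)‖x − y‖² + δ, where L(δ) = L_ν [ (L_ν/(2δ)) · (1−ν)/(1+ν) ]^{(1−ν)/(1+ν)}. In particular, ψ(x,y) = ⟨∇f(y), x − y⟩ with value f(y) is a (δ, L(δ), ‖·‖)-model of f at every y ∈ Q. -/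
open RealInnerProductSpace

/-!
On the segment from `y` to `x`, put `g t = f (y + t (x - y))` and `r = nrm (x - y)`. The lower
bound says that the convex function `g` lies above its tangent at `0`. For the upper bound,
duality and the Hölder condition give `g' t ≤ g' 0 + Lν r ^ (1 + ν) t ^ ν`, which integrates to
`f x - f y - ⟪Df y, x - y⟫ ≤ Lν / (1 + ν) * r ^ (1 + ν)`. It remains to trade the power `1 + ν`
for the power `2` at the price of `δ` (`holder_power_le_quadratic`); after rescaling this is
Bernoulli's inequality with exponent `2 / (1 + ν)`.
-/

/-- The dual pairing inequality of a norm and its dual, obtained by normalizing `v`. -/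
lemma inner_le_dual_mul {n : ℕ} {nrm dnrm : EuclideanSpace ℝ (Fin n) → ℝ}
    (h_zero : ∀ z, nrm z = 0 ↔ z = 0)
    (h_smul : ∀ (c : ℝ) z, nrm (c • z) = |c| * nrm z)
    (h_nonneg : ∀ z, 0 ≤ nrm z)
    (h_dual : ∀ l, IsGreatest ((fun v => ⟪l, v⟫) '' {v | nrm v ≤ 1}) (dnrm l))
    (l v : EuclideanSpace ℝ (Fin n)) : ⟪l, v⟫ ≤ dnrm l * nrm v := by
  rcases (h_nonneg v).eq_or_lt with h | h
  · have hv : v = 0 := (h_zero v).1 h.symm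
    rw [← h, hv]
    simp
  · have hunit : nrm ((nrm v)⁻¹ • v) ≤ 1 := by
      rw [h_smul, abs_of_pos (inv_pos.2 h), inv_mul_cancel₀ h.ne']
    have hle : ⟪l, (nrm v)⁻¹ • v⟫ ≤ dnrm l := (h_dual l).2 ⟨_, hunit, rfl⟩
    rw [real_inner_smul_right, inv_mul_le_iff₀ h] at hle
    linarith

/-- The scalar inequality behind `L(δ)`: a term of order `1 + ν` is dominated by a quadratic
term plus `δ`. -/
lemma holder_power_le_quadratic {ν L δ r : ℝ} (hν : ν ∈ Set.Ico (0 : ℝ) 1) (hL : 0 < L)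
    (hδ : 0 < δ) (hr : 0 ≤ r) :
    L / (1 + ν) * r ^ (1 + ν) ≤
      (L * (L / (2 * δ) * ((1 - ν) / (1 + ν))) ^ ((1 - ν) / (1 + ν))) / 2 * r ^ 2 + δ := by
  obtain ⟨h0, h1⟩ := hν
  have hν' : 0 < 1 + ν := by linarith
  set p := (1 - ν) / (1 + ν) with hp
  have hp0 : 0 < p := div_pos (by linarith) hν'
  set A := L / (2 * δ) * p with hA
  have hA0 : 0 < A := by positivity
  set t := r ^ (1 + ν) with ht
  have ht0 : 0 ≤ t := Real.rpow_nonneg hr _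
  have h1p : 1 + p = 2 / (1 + ν) := by rw [hp]; field_simp; ring
  -- The squared radius is `t ^ (1 + p)`.
  have hr2 : r ^ 2 = t ^ (1 + p) := by
    rw [ht, ← Real.rpow_mul hr, h1p, mul_div_cancel₀ _ hν'.ne', Real.rpow_two]
  -- Bernoulli's inequality for `u = A * t`.
  have hB : 1 + (1 + p) * (A * t - 1) ≤ (A * t) ^ (1 + p) := by
    have := one_add_mul_self_le_rpow_one_add (s := A * t - 1) (p := 1 + p)
      (by nlinarith [mul_nonneg hA0.le ht0]) (by linarith)
    simpa using this
  have hpow : (A * t) ^ (1 + p) = A * (A ^ p * r ^ 2) := by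
    rw [Real.mul_rpow hA0.le ht0, Real.rpow_add hA0, Real.rpow_one, hr2, mul_assoc]
  rw [hpow] at hB
  have hδA : δ = L / 2 * (p / A) := by rw [hA]; field_simp
  have hL1 : L / (1 + ν) = L / 2 * (1 + p) := by rw [h1p]; field_simp
  have hmain : (1 + p) * t ≤ A ^ p * r ^ 2 + p / A := by
    refine le_of_mul_le_mul_left ?_ hA0
    have : A * (p / A) = p := by field_simp
    rw [mul_add, this]
    linarith
  rw [hL1]
  have := mul_le_mul_of_nonneg_left hmain (by positivity : 0 ≤ L / 2)
  calc L / 2 * (1 + p) * t = L / 2 * ((1 + p) * t) := by ring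
    _ ≤ _ := this
    _ = L * A ^ p / 2 * r ^ 2 + L / 2 * (p / A) := by ring
    _ = _ := by rw [← hδA]

/-- **Inexact model for functions with Hölder continuous gradient.**
If `f` is convex and differentiable on `Q` with `ν`-Hölder continuous gradient
(w.r.t. a general norm `nrm` with dual norm `dnrm`), then for every `δ > 0` the
linearization `⟨∇f(y), x − y⟩` is a `(δ, L(δ), nrm)`-model of `f` at every `y ∈ Q`,
with `L(δ) = L_ν [ (L_ν/(2δ)) (1−ν)/(1+ν) ]^{(1−ν)/(1+ν)}`. -/
theorem holder_gradient_inexact_model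
    {n : ℕ} (Q : Set (EuclideanSpace ℝ (Fin n)))
    (hQne : Q.Nonempty) (hQconv : Convex ℝ Q)
    (f : EuclideanSpace ℝ (Fin n) → ℝ) (hfconv : ConvexOn ℝ Q f)
    -- a general norm `nrm` on `ℝⁿ` and its dual norm `dnrm`
    (nrm dnrm : EuclideanSpace ℝ (Fin n) → ℝ)
    (hnrm_zero : ∀ z, nrm z = 0 ↔ z = 0)
    (hnrm_smul : ∀ (c : ℝ) z, nrm (c • z) = |c| * nrm z)
    (hnrm_add : ∀ z w, nrm (z + w) ≤ nrm z + nrm w)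
    (hdnrm : ∀ l, IsGreatest ((fun v => ⟪l, v⟫) '' {v | nrm v ≤ 1}) (dnrm l))
    -- gradient of `f` on `Q`
    (Df : EuclideanSpace ℝ (Fin n) → EuclideanSpace ℝ (Fin n))
    (hDf : ∀ z ∈ Q, HasGradientWithinAt f (Df z) Q z)
    -- `ν`-Hölder continuity of the gradient
    (ν : ℝ) (hν : ν ∈ Set.Ico (0 : ℝ) 1)
    (Lν : ℝ) (hLν : 0 < Lν)
    (hHolder : ∀ x ∈ Q, ∀ y ∈ Q, dnrm (Df x - Df y) ≤ Lν * nrm (x - y) ^ ν) :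
    ∀ δ : ℝ, 0 < δ → ∀ x ∈ Q, ∀ y ∈ Q,
      0 ≤ f x - f y - ⟪Df y, x - y⟫ ∧
      f x - f y - ⟪Df y, x - y⟫ ≤
        (Lν * (Lν / (2 * δ) * ((1 - ν) / (1 + ν))) ^ ((1 - ν) / (1 + ν))) / 2 *
          nrm (x - y) ^ 2 + δ := by
  have hnn : ∀ z, 0 ≤ nrm z := by
    intro z
    have h := hnrm_add z (-z)
    have hneg : nrm (-z) = nrm z := by simpa using hnrm_smul (-1) z
    rw [add_neg_cancel, (hnrm_zero 0).2 rfl, hneg] at h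
    linarith
  intro δ hδ x hx y hy
  set d := x - y with hd
  set r := nrm d with hr
  have hr0 : 0 ≤ r := hnn d
  let ℓ : ℝ →ᵃ[ℝ] EuclideanSpace ℝ (Fin n) := AffineMap.lineMap y x
  have hmaps : Set.MapsTo ℓ (Set.Icc (0 : ℝ) 1) Q := hQconv.mapsTo_lineMap hy hx
  have hℓ0 : ℓ 0 = y := AffineMap.lineMap_apply_zero y x
  have hℓ1 : ℓ 1 = x := AffineMap.lineMap_apply_one y x
  have hderiv : ∀ t ∈ Set.Icc (0 : ℝ) 1,
      HasDerivWithinAt (f ∘ ℓ) ⟪Df (ℓ t), d⟫ (Set.Icc 0 1) t := by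
    intro t ht
    have h := (hDf _ (hmaps ht)).hasFDerivWithinAt.comp_hasDerivWithinAt t
      (AffineMap.hasDerivWithinAt_lineMap (a := y) (b := x)) hmaps
    simpa using h
  constructor
  · have hconv : ConvexOn ℝ (Set.Icc (0 : ℝ) 1) (f ∘ ℓ) :=
      (hfconv.comp_affineMap ℓ).subset hmaps (convex_Icc 0 1)
    have h := hconv.le_slope_of_hasDerivWithinAt (Set.left_mem_Icc.2 zero_le_one)
      (Set.right_mem_Icc.2 zero_le_one) zero_lt_one (hderiv 0 (Set.left_mem_Icc.2 zero_le_one))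
    rw [slope_def_field] at h
    simp only [Function.comp_apply, hℓ0, hℓ1, sub_zero, div_one] at h
    linarith
  · refine le_trans ?_ (holder_power_le_quadratic hν hLν hδ hr0)
    have hν1 : 0 < 1 + ν := by linarith [hν.1]
    set C := Lν * r ^ (1 + ν) with hC
    -- The majorant of `f ∘ ℓ`; its derivative is the Hölder bound on the derivative of `f ∘ ℓ`.
    have hB : ∀ t : ℝ, HasDerivAt (fun t : ℝ => f y + t * ⟪Df y, d⟫ + C / (1 + ν) * t ^ (1 + ν))
        (⟪Df y, d⟫ + C * t ^ ν) t := by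
      intro t
      have h1 := ((hasDerivAt_id t).mul_const ⟪Df y, d⟫).const_add (f y)
      have h2 := (Real.hasDerivAt_rpow_const (x := t) (p := 1 + ν)
        (Or.inr (by linarith [hν.1]))).const_mul (C / (1 + ν))
      refine (h1.add h2).congr_deriv ?_
      rw [add_sub_cancel_left]
      field_simp
    have key := image_le_of_deriv_right_le_deriv_boundary (f := f ∘ ℓ)
      (f' := fun t => ⟪Df (ℓ t), d⟫) (a := 0) (b := 1)
      (fun t ht => (hderiv t ht).continuousWithinAt)
      (fun t ht => (hderiv t ⟨ht.1, ht.2.le⟩).mono_of_mem_nhdsWithin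
        (Icc_mem_nhdsGE_of_mem ht))
      (B := fun t : ℝ => f y + t * ⟪Df y, d⟫ + C / (1 + ν) * t ^ (1 + ν))
      (B' := fun t => ⟪Df y, d⟫ + C * t ^ ν)
      (by simp [hℓ0, Real.zero_rpow hν1.ne'])
      (fun t _ => (hB t).continuousAt.continuousWithinAt)
      (fun t _ => (hB t).hasDerivWithinAt)
      (by
        intro t ht
        have hz : ℓ t - y = t • d := by
          simp [ℓ, AffineMap.lineMap_apply, hd]
        have h1 := inner_le_dual_mul hnrm_zero hnrm_smul hnn hdnrm (Df (ℓ t) - Df y) d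
        have h2 := hHolder _ (hmaps ⟨ht.1, ht.2.le⟩) y hy
        rw [hz, hnrm_smul, abs_of_nonneg ht.1, Real.mul_rpow ht.1 hr0] at h2
        have h3 := mul_le_mul_of_nonneg_right h2 hr0
        rw [inner_sub_left] at h1
        have h4 : C * t ^ ν = Lν * (t ^ ν * r ^ ν) * r := by
          rw [hC, Real.rpow_add_of_nonneg hr0 zero_le_one hν.1, Real.rpow_one]
          ring
        show ⟪Df (ℓ t), d⟫ ≤ ⟪Df y, d⟫ + C * t ^ ν
        rw [h4]
        linarith)
      (Set.right_mem_Icc.2 zero_le_one)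
    simp only [Function.comp_apply, hℓ1, one_mul, Real.one_rpow, mul_one] at key
    have : C / (1 + ν) = Lν / (1 + ν) * r ^ (1 + ν) := by rw [hC]; ring
    linarith
end

section
/- Stochastic gradients yield a (δ₁, δ₂, 2L, ‖·‖₂)-model. Let Q ⊆ ℝⁿ be a nonempty convex set and f : Q → ℝ a convex differentiable function with L-Lipschitz gradient with respect to the Euclidean norm (L > 0). Fix y ∈ Q and an arbitrary vector g ∈ ℝⁿ (e.g., a stochastic gradient estimate at y), and set ψ(x, y) = ⟨g, x − y⟩. Then for all x ∈ Q, −δ₁(x,y) ≤ f(x) − (f(y) + ψ(x,y)) ≤ (2L/2)‖x − y‖₂² + δ₂, where δ₁(x,y) = ⟨g − ∇f(y), x − y⟩ and δ₂ = ‖g − ∇f(y)‖₂²/(2L); that is, ψ is a (δ₁, δ₂, 2L, ‖·‖₂)-model of f at y. -/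
open RealInnerProductSpace

/-!
Restrict `f` to the segment from `y` to `x`, `φ t = f (y + t • (x - y))` on `[0, 1]`, with
derivative `⟪Df (y + t • (x - y)), x - y⟫` (`hasDerivWithinAt_segment`). Convexity of `φ` gives
`φ' 0 ≤ φ 1 - φ 0`, which is the lower bound. The Lipschitz bound gives
`φ' t ≤ φ' 0 + L t ‖x - y‖²`, and comparing derivatives yields the descent inequality
`f x ≤ f y + ⟪Df y, x - y⟫ + L / 2 * ‖x - y‖²` (`descent_inequality`). The upper bound follows by
applying Young's inequality to `⟪Df y - g, x - y⟫`, which costs another `L / 2 * ‖x - y‖²`.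
-/

section

variable {E : Type*} [NormedAddCommGroup E] [InnerProductSpace ℝ E]
  {Q : Set E} {f : E → ℝ} {Df : E → E} {x y : E}

lemma segment_mem_s11 (hQ : Convex ℝ Q) (hx : x ∈ Q) (hy : y ∈ Q) {t : ℝ}
    (ht : t ∈ Set.Icc (0 : ℝ) 1) : y + t • (x - y) ∈ Q :=
  hQ.add_smul_sub_mem hy hx ht

variable [CompleteSpace E]

lemma hasDerivWithinAt_segment_s11 (hQ : Convex ℝ Q)
    (hDf : ∀ z ∈ Q, HasGradientWithinAt f (Df z) Q z) (hx : x ∈ Q) (hy : y ∈ Q) {t : ℝ}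
    (ht : t ∈ Set.Icc (0 : ℝ) 1) :
    HasDerivWithinAt (fun s : ℝ => f (y + s • (x - y)))
      ⟪Df (y + t • (x - y)), x - y⟫ (Set.Icc 0 1) t := by
  have h1 : HasDerivWithinAt (fun s : ℝ => y + s • (x - y)) (x - y) (Set.Icc 0 1) t := by
    simpa using (((hasDerivAt_id t).smul_const (x - y)).const_add y).hasDerivWithinAt
  have h2 := (hDf _ (segment_mem_s11 hQ hx hy ht)).hasFDerivWithinAt
  have h3 := h2.comp_hasDerivWithinAt t h1 (fun s hs => segment_mem_s11 hQ hx hy hs)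
  simpa [Function.comp_def] using h3

/-- The first-order lower bound for convex functions, with the gradient taken relative to `Q`. -/
lemma gradient_inequality_s11 (hf : ConvexOn ℝ Q f)
    (hDf : ∀ z ∈ Q, HasGradientWithinAt f (Df z) Q z) (hx : x ∈ Q) (hy : y ∈ Q) :
    f y + ⟪Df y, x - y⟫ ≤ f x := by
  have hd := hasDerivWithinAt_segment_s11 hf.1 hDf hx hy (t := 0) (by simp)
  have hc : ConvexOn ℝ (Set.Icc (0 : ℝ) 1) (fun s : ℝ => f (y + s • (x - y))) := by
    refine ⟨convex_Icc 0 1, fun s hs t ht a b ha hb hab => ?_⟩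
    have h := hf.2 (segment_mem_s11 hf.1 hx hy hs) (segment_mem_s11 hf.1 hx hy ht) ha hb hab
    have e : a • (y + s • (x - y)) + b • (y + t • (x - y))
        = y + (a • s + b • t) • (x - y) := by
      obtain rfl : b = 1 - a := by linarith
      simp only [smul_eq_mul]
      module
    rwa [e] at h
  have h := hc.le_slope_of_hasDerivWithinAt (x := 0) (y := 1) (by simp) (by simp) one_pos hd
  simp [slope_def_field] at h
  linarith

lemma descent_inequality (hQ : Convex ℝ Q)
    (hDf : ∀ z ∈ Q, HasGradientWithinAt f (Df z) Q z) {L : ℝ}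
    (hLip : ∀ x ∈ Q, ∀ y ∈ Q, ‖Df x - Df y‖ ≤ L * ‖x - y‖) (hx : x ∈ Q) (hy : y ∈ Q) :
    f x ≤ f y + ⟪Df y, x - y⟫ + L / 2 * ‖x - y‖ ^ 2 := by
  have hB : ∀ t : ℝ, HasDerivAt
      (fun t : ℝ => f y + t * ⟪Df y, x - y⟫ + L / 2 * ‖x - y‖ ^ 2 * t ^ 2)
      (⟪Df y, x - y⟫ + L * ‖x - y‖ ^ 2 * t) t := by
    intro t
    have h := (((hasDerivAt_id t).mul_const ⟪Df y, x - y⟫).const_add (f y)).add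
      (((hasDerivAt_id t).pow 2).const_mul (L / 2 * ‖x - y‖ ^ 2))
    refine h.congr_deriv ?_
    simp
    ring
  have hd := fun (t : ℝ) (ht : t ∈ Set.Icc (0 : ℝ) 1) =>
    hasDerivWithinAt_segment_s11 hQ hDf hx hy ht
  have key := image_le_of_deriv_right_le_deriv_boundary
    (f := fun s : ℝ => f (y + s • (x - y)))
    (f' := fun t => ⟪Df (y + t • (x - y)), x - y⟫)
    (a := 0) (b := 1)
    (fun t ht => (hd t ht).continuousWithinAt)
    (fun t ht => (hd t ⟨ht.1, ht.2.le⟩).mono_of_mem_nhdsWithin (Icc_mem_nhdsGE_of_mem ht))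
    (by simp)
    (fun t _ => (hB t).continuousAt.continuousWithinAt)
    (fun t _ => (hB t).hasDerivWithinAt)
    (by
      intro t ht
      have h1 := hLip _ (segment_mem_s11 hQ hx hy ⟨ht.1, ht.2.le⟩) y hy
      have h2 := real_inner_le_norm (Df (y + t • (x - y)) - Df y) (x - y)
      rw [inner_sub_left] at h2
      rw [add_sub_cancel_left, norm_smul, Real.norm_of_nonneg ht.1] at h1
      have h3 := mul_le_mul_of_nonneg_right h1 (norm_nonneg (x - y))
      linarith)
    (x := 1) (by simp)
  simpa using key

end

/-- **Stochastic gradients yield a `(δ₁, δ₂, 2L, ‖·‖₂)`-model.**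
If `f` is convex with `L`-Lipschitz gradient (Euclidean norm) and `g` is any vector
(e.g. a stochastic gradient estimate at `y`), then `ψ(x,y) = ⟨g, x − y⟩` is a
`(δ₁, δ₂, 2L, ‖·‖₂)`-model of `f` at `y` with `δ₁(x,y) = ⟨g − ∇f(y), x − y⟩` and
`δ₂ = ‖g − ∇f(y)‖₂²/(2L)`. -/
theorem stochastic_gradient_inexact_model
    {n : ℕ} (Q : Set (EuclideanSpace ℝ (Fin n)))
    (hQne : Q.Nonempty) (hQconv : Convex ℝ Q)
    (f : EuclideanSpace ℝ (Fin n) → ℝ) (hfconv : ConvexOn ℝ Q f)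
    (Df : EuclideanSpace ℝ (Fin n) → EuclideanSpace ℝ (Fin n))
    (hDf : ∀ z ∈ Q, HasGradientWithinAt f (Df z) Q z)
    (L : ℝ) (hL : 0 < L)
    (hLip : ∀ x ∈ Q, ∀ y ∈ Q, ‖Df x - Df y‖ ≤ L * ‖x - y‖)
    (y : EuclideanSpace ℝ (Fin n)) (hy : y ∈ Q)
    (g : EuclideanSpace ℝ (Fin n)) :
    ∀ x ∈ Q,
      -⟪g - Df y, x - y⟫ ≤ f x - (f y + ⟪g, x - y⟫) ∧
      f x - (f y + ⟪g, x - y⟫) ≤ 2 * L / 2 * ‖x - y‖ ^ 2 + ‖g - Df y‖ ^ 2 / (2 * L) := by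
  intro x hx
  have h1 := gradient_inequality_s11 hfconv hDf hx hy
  have h2 := descent_inequality hQconv hDf hLip hx hy
  have h3 : -⟪g - Df y, x - y⟫ ≤ L / 2 * ‖x - y‖ ^ 2 + ‖g - Df y‖ ^ 2 / (2 * L) := by
    have h4 := neg_le_of_abs_le (abs_real_inner_le_norm (g - Df y) (x - y))
    have h5 : L / 2 * ‖x - y‖ ^ 2 + ‖g - Df y‖ ^ 2 / (2 * L) - ‖g - Df y‖ * ‖x - y‖
        = (L * ‖x - y‖ - ‖g - Df y‖) ^ 2 / (2 * L) := by
      field_simp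
      ring
    have h6 : 0 ≤ (L * ‖x - y‖ - ‖g - Df y‖) ^ 2 / (2 * L) := by positivity
    linarith
  rw [inner_sub_left] at h3 ⊢
  constructor <;> linarith
end

section
/- Key one-step lemma for Bregman proximal steps with inexact minimization. Let Q ⊆ ℝⁿ be a nonempty closed convex set, ψ : Q → ℝ a convex function, d : Q → ℝ a convex continuously differentiable function with Bregman divergence V[y](x) = d(x) − d(y) − ⟨∇d(y), x − y⟩, y ∈ Q, and δ̃ ≥ 0. If x̃ ∈ Q is a δ̃-inexact minimizer on Q of φ(x) = ψ(x) + V[y](x), i.e., there exists h ∈ ∂φ(x̃) with ⟨h, x − x̃⟩ ≥ −δ̃ for all x ∈ Q, then for all x ∈ Q: ψ(x) + V[y](x) ≥ ψ(x̃) + V[y](x̃) + V[x̃](x) − δ̃. -/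
/-!
Since `V[y](x) - V[y](x̃) - V[x̃](x) = ⟪∇d(x̃) - ∇d(y), x - x̃⟫`, the claim follows from
`ψ(x) - ψ(x̃) + ⟪∇d(x̃) - ∇d(y), x - x̃⟫ ≥ ⟪h, x - x̃⟫`, i.e. from `h - ∇d(x̃) + ∇d(y) ∈ ∂ψ(x̃)`.
To obtain this, the subgradient inequality for `φ` is applied at `x̃ + t(x - x̃)`, the `ψ`-increment
is bounded by `t(ψ(x) - ψ(x̃))` by convexity, and after division by `t` one lets `t ↓ 0`: the
difference quotient of `d` tends to `⟪∇d(x̃), x - x̃⟫` by `le_inner_of_le_increment`.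
-/

open RealInnerProductSpace

/-- A lower bound `t * A` for the increments of `d` along the segment from `a` to `x` passes to the
one-sided directional derivative `⟪g, x - a⟫`; the gradient is only taken relative to `Q`. -/
lemma le_inner_of_le_increment {E : Type*} [NormedAddCommGroup E] [InnerProductSpace ℝ E]
    [CompleteSpace E] {Q : Set E} (hQ : Convex ℝ Q) {d : E → ℝ} {g a x : E}
    (hd : HasGradientWithinAt d g Q a) (ha : a ∈ Q) (hx : x ∈ Q) {A : ℝ}
    (hA : ∀ t ∈ Set.Ioc (0 : ℝ) 1, t * A ≤ d (a + t • (x - a)) - d a) :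
    A ≤ ⟪g, x - a⟫ := by
  have hline : HasDerivWithinAt (fun t : ℝ => a + t • (x - a)) (x - a) (Set.Ioc 0 1) 0 := by
    simpa using (((hasDerivAt_id (0 : ℝ)).smul_const (x - a)).const_add a).hasDerivWithinAt
  have hmaps : Set.MapsTo (fun t : ℝ => a + t • (x - a)) (Set.Ioc 0 1) Q :=
    fun t ht => hQ.add_smul_sub_mem ha hx ⟨ht.1.le, ht.2⟩
  have hd' : HasFDerivWithinAt d (InnerProductSpace.toDual ℝ E g) Q (a + (0 : ℝ) • (x - a)) := by
    simpa using hd.hasFDerivWithinAt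
  have hder := hd'.comp_hasDerivWithinAt (0 : ℝ) hline hmaps
  rw [hasDerivWithinAt_iff_tendsto_slope' (by simp), InnerProductSpace.toDual_apply_apply] at hder
  have : (nhdsWithin (0 : ℝ) (Set.Ioc 0 1)).NeBot := by
    rw [nhdsWithin_Ioc_eq_nhdsGT zero_lt_one]
    infer_instance
  refine ge_of_tendsto hder ?_
  filter_upwards [self_mem_nhdsWithin] with t ht
  have := hA t ht
  rw [slope_def_field, le_div_iff₀ (by simpa using ht.1)]
  simpa [mul_comm] using this

/-- **Key one-step lemma for Bregman proximal steps with inexact minimization.**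
If `x̃` is a `δ̃`-inexact minimizer on `Q` of `φ(x) = ψ(x) + V[y](x)`, where
`V[y](x) = d(x) − d(y) − ⟪∇d(y), x − y⟫` is the Bregman divergence of a convex
continuously differentiable `d`, then
`ψ(x) + V[y](x) ≥ ψ(x̃) + V[y](x̃) + V[x̃](x) − δ̃` for all `x ∈ Q`. -/
theorem bregman_one_step_lemma
    {n : ℕ} (Q : Set (EuclideanSpace ℝ (Fin n)))
    (hQne : Q.Nonempty) (hQclosed : IsClosed Q) (hQconv : Convex ℝ Q)
    (ψ : EuclideanSpace ℝ (Fin n) → ℝ) (hψconv : ConvexOn ℝ Q ψ)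
    (d : EuclideanSpace ℝ (Fin n) → ℝ) (hdconv : ConvexOn ℝ Q d)
    (Dd : EuclideanSpace ℝ (Fin n) → EuclideanSpace ℝ (Fin n))
    (hd_diff : ∀ z ∈ Q, HasGradientWithinAt d (Dd z) Q z)
    (hd_cont : ContinuousOn Dd Q)
    -- Bregman divergence
    (V : EuclideanSpace ℝ (Fin n) → EuclideanSpace ℝ (Fin n) → ℝ)
    (hV : ∀ w z, V w z = d z - d w - ⟪Dd w, z - w⟫)
    (y : EuclideanSpace ℝ (Fin n)) (hyQ : y ∈ Q)
    (δt : ℝ) (hδt : 0 ≤ δt)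
    (xt : EuclideanSpace ℝ (Fin n)) (hxtQ : xt ∈ Q)
    -- `xt` is a `δ̃`-inexact minimizer of `φ(x) = ψ(x) + V[y](x)` on `Q`
    (hmin : ∃ h : EuclideanSpace ℝ (Fin n),
      (∀ x ∈ Q, ψ x + V y x ≥ ψ xt + V y xt + ⟪h, x - xt⟫) ∧
      (∀ x ∈ Q, ⟪h, x - xt⟫ ≥ -δt)) :
    ∀ x ∈ Q, ψ x + V y x ≥ ψ xt + V y xt + V xt x - δt := by
  obtain ⟨h, hsub, hge⟩ := hmin
  intro x hx
  have key : ⟪h, x - xt⟫ + ⟪Dd y, x - xt⟫ - (ψ x - ψ xt) ≤ ⟪Dd xt, x - xt⟫ := by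
    refine le_inner_of_le_increment hQconv (hd_diff xt hxtQ) hxtQ hx fun t ht => ?_
    have hφ := hsub _ (hQconv.add_smul_sub_mem hxtQ hx ⟨ht.1.le, ht.2⟩)
    have hψ := hψconv.2 hxtQ hx (sub_nonneg.2 ht.2) ht.1.le (sub_add_cancel 1 t)
    have hpt : (1 - t) • xt + t • x = xt + t • (x - xt) := by module
    have hy : xt + t • (x - xt) - y = (xt - y) + t • (x - xt) := by abel
    rw [hpt] at hψ
    simp only [hV, hy, add_sub_cancel_left, inner_add_right, real_inner_smul_right,
      smul_eq_mul] at hφ hψ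
    linarith
  have hsplit : x - y = (x - xt) + (xt - y) := by abel
  have := hge x hx
  simp only [hV, hsplit, inner_add_right]
  linarith
end
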